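/- Let q > 1 and let u be a solution to Δ²u + u^{−q} = 0 in ℝ³ with u > 0, and assume β := (1/8π)∫_{ℝ³} u(x)^{−q} dx < +∞. Then there exist a rotation R ∈ O(3), a point x₀ ∈ ℝ³, two disjoint (possibly empty) subsets I₁, I₂ of {1,2,3}, real numbers a_i > 0 for i ∈ I₁, real numbers b_i with |b_i| < β for i ∈ I₂, and c > 0, such that the function ũ(x) := u(Rx + x₀) satisfies ũ(x) = (β + o(1))|x| + Σ_{i∈I₁} a_i x_i² + Σ_{i∈I₂} b_i x_i + c, where o(1) → 0 as |x| → ∞. -/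

import Mathlib

open MeasureTheory Filter Topology Real

/-- The Laplacian of a function on ℝ³. -/
noncomputable def laplacian (u : EuclideanSpace ℝ (Fin 3) → ℝ) (x : EuclideanSpace ℝ (Fin 3)) : ℝ :=
  ∑ i : Fin 3, iteratedFDeriv ℝ 2 u x ![EuclideanSpace.single i 1, EuclideanSpace.single i 1]

/-!
In dimension three `‖x - y‖` is `-8π` times the fundamental solution of `Δ²`, so subtracting the
potential `(8π)⁻¹ ∫ (‖x - y‖ - ‖y‖) u(y) ^ (-q) dy` from `u` leaves a biharmonic function. The
potential is asymptotic to `β ‖x‖`, and since `u > 0` the remainder is bounded below by a linear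
function of `‖x‖`. By Pizzetti's formula the averages of a biharmonic function over balls grow at
most quadratically; with the lower bound the same holds for the averages of its absolute value, and
rescaled interior estimates make all third derivatives vanish. Hence the remainder is a quadratic
polynomial.

Diagonalising and completing squares gives the normal form. Positivity of `u` excludes negative
eigenvalues. In a null direction with slope at most `-β` (or at least `β`), `u` would be bounded on
a half-infinite tube, where `u ^ (-q)` could not be integrable.
-/

open Module
open scoped Laplacian Convolution

section Laplacian

lemma contDiff_fderiv_apply_const {E : Type*} [NormedAddCommGroup E] [NormedSpace ℝ E]
    {n : WithTop ℕ∞} {f : E → ℝ} (hf : ContDiff ℝ (n + 1) f) (v : E) :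
    ContDiff ℝ n (fun x ↦ fderiv ℝ f x v) :=
  (hf.fderiv_right le_rfl).clm_apply contDiff_const

variable {E : Type*} [NormedAddCommGroup E] [InnerProductSpace ℝ E]

lemma hasFDerivAt_comp_norm_sq {F : ℝ → ℝ} {F' : ℝ} {x : E} (h : HasDerivAt F F' (‖x‖ ^ 2)) :
    HasFDerivAt (fun y ↦ F (‖y‖ ^ 2)) ((2 * F') • innerSL ℝ x) x := by
  rw [mul_comm, mul_smul, ofNat_smul_eq_nsmul]
  exact h.comp_hasFDerivAt x (hasStrictFDerivAt_norm_sq x).hasFDerivAt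

lemma contDiff_norm_sq_add_const_rpow {c : ℝ} (hc : 0 < c) (α : ℝ) {n : WithTop ℕ∞} :
    ContDiff ℝ n fun x : E ↦ (‖x‖ ^ 2 + c) ^ α :=
  ((contDiff_norm_sq ℝ).add contDiff_const).rpow_const_of_ne fun x ↦ by positivity

variable [FiniteDimensional ℝ E]

lemma laplacian_eq_sum_fderiv_fderiv {ι : Type*} [Fintype ι] (b : OrthonormalBasis ι ℝ E)
    (f : E → ℝ) : Δ f = fun x ↦ ∑ i, fderiv ℝ (fderiv ℝ f) x (b i) (b i) := by
  simp [InnerProductSpace.laplacian_eq_iteratedFDeriv_orthonormalBasis f b,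
    iteratedFDeriv_two_apply]

lemma laplacian_eq_sum_fderiv_fderiv_apply {ι : Type*} [Fintype ι] (b : OrthonormalBasis ι ℝ E)
    {f : E → ℝ} (hf : ContDiff ℝ 2 f) :
    Δ f = fun x ↦ ∑ i, fderiv ℝ (fun y ↦ fderiv ℝ f y (b i)) x (b i) := by
  have hd : Differentiable ℝ (fderiv ℝ f) :=
    (hf.fderiv_right (m := 1) (by norm_num)).differentiable one_ne_zero
  simp [laplacian_eq_sum_fderiv_fderiv b, fderiv_clm_apply (hd _) (differentiableAt_const _)]

lemma contDiff_laplacian {n : WithTop ℕ∞} {f : E → ℝ} (hf : ContDiff ℝ (n + 2) f) :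
    ContDiff ℝ n (Δ f) := by
  rw [laplacian_eq_sum_fderiv_fderiv (stdOrthonormalBasis ℝ E)]
  have hf' : ContDiff ℝ (n + 1) (fderiv ℝ f) :=
    hf.fderiv_right (by rw [add_assoc, one_add_one_eq_two])
  exact ContDiff.sum fun i _ ↦
    ((hf'.fderiv_right le_rfl).clm_apply contDiff_const).clm_apply contDiff_const

lemma contDiff_two_laplacian {f : E → ℝ} (hf : ContDiff ℝ 4 f) : ContDiff ℝ 2 (Δ f) :=
  contDiff_laplacian (hf.of_le (by norm_num))

lemma continuous_laplacian_laplacian {f : E → ℝ} (hf : ContDiff ℝ 4 f) :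
    Continuous (Δ (Δ f)) :=
  (contDiff_laplacian (n := 0) ((contDiff_two_laplacian hf).of_le (by norm_num))).continuous

lemma hasCompactSupport_laplacian {f : E → ℝ} (hf : HasCompactSupport f) :
    HasCompactSupport (Δ f) := by
  rw [laplacian_eq_sum_fderiv_fderiv (stdOrthonormalBasis ℝ E)]
  refine ((hf.fderiv ℝ).fderiv ℝ).mono fun x hx ↦ ?_
  contrapose! hx
  simp only [Function.notMem_support] at hx ⊢
  simp [hx]

lemma laplacian_mul_add_mul {f g : E → ℝ} (hf : ContDiff ℝ 2 f) (hg : ContDiff ℝ 2 g) (a b : ℝ) :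
    Δ (fun x ↦ a * f x + b * g x) = fun x ↦ a * Δ f x + b * Δ g x := by
  ext1 x
  have hadd := ContDiffAt.laplacian_add (f₁ := a • f) (f₂ := b • g)
    (hf.contDiffAt.const_smul a (x := x)) (hg.contDiffAt.const_smul b)
  rwa [InnerProductSpace.laplacian_smul a hf.contDiffAt,
    InnerProductSpace.laplacian_smul b hg.contDiffAt] at hadd

lemma laplacian_comp_smul_sub (f : E → ℝ) (c : ℝ) (a : E) :
    Δ (fun x ↦ f (c • (x - a))) = fun x ↦ c ^ 2 * Δ f (c • (x - a)) := by
  have hderiv : fderiv ℝ (fun x ↦ f (c • (x - a))) =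
      fun x ↦ c • fderiv ℝ f (c • (x - a)) := by
    ext1 x
    rw [fderiv_comp_sub (f := fun x ↦ f (c • x)), fderiv_comp_smul]
  have hderiv₂ (x : E) : fderiv ℝ (fderiv ℝ fun x ↦ f (c • (x - a))) x =
      c ^ 2 • fderiv ℝ (fderiv ℝ f) (c • (x - a)) := by
    rw [hderiv, ← Pi.smul_def, fderiv_const_smul_field (f := fun x ↦ fderiv ℝ f (c • (x - a))) c,
      Pi.smul_apply, fderiv_comp_sub (f := fun x ↦ fderiv ℝ f (c • x)), fderiv_comp_smul,
      smul_smul, sq]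
  simp only [laplacian_eq_sum_fderiv_fderiv (stdOrthonormalBasis ℝ E), hderiv₂, smul_apply,
    smul_eq_mul, Finset.mul_sum]

lemma laplacian_comp_sub (f : E → ℝ) (a : E) :
    Δ (fun x ↦ f (x - a)) = fun x ↦ Δ f (x - a) := by
  simpa using laplacian_comp_smul_sub f 1 a

lemma laplacian_laplacian_comp_smul_sub {f : E → ℝ} (hf : ContDiff ℝ 4 f) (c : ℝ) (a : E) :
    Δ (Δ fun x ↦ f (c • (x - a))) = fun x ↦ c ^ 4 * Δ (Δ f) (c • (x - a)) := by
  have hf' : ContDiff ℝ 2 fun x ↦ Δ f (c • (x - a)) :=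
    (contDiff_two_laplacian hf).comp (by fun_prop)
  ext1 x
  rw [laplacian_comp_smul_sub]
  refine (InnerProductSpace.laplacian_smul (c ^ 2) hf'.contDiffAt).trans ?_
  rw [laplacian_comp_smul_sub, smul_eq_mul, ← mul_assoc, ← pow_add]

lemma laplacian_comp_norm_sq {F F' F'' : ℝ → ℝ} (hF : ∀ s, 0 ≤ s → HasDerivAt F (F' s) s)
    (hF' : ∀ s, 0 ≤ s → HasDerivAt F' (F'' s) s) (x : E) :
    Δ (fun y : E ↦ F (‖y‖ ^ 2)) x =
      2 * finrank ℝ E * F' (‖x‖ ^ 2) + 4 * ‖x‖ ^ 2 * F'' (‖x‖ ^ 2) := by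
  set b := stdOrthonormalBasis ℝ E
  have hderiv : fderiv ℝ (fun y : E ↦ F (‖y‖ ^ 2)) = fun y ↦ (2 * F' (‖y‖ ^ 2)) • innerSL ℝ y :=
    funext fun y ↦ (hasFDerivAt_comp_norm_sq (hF _ (sq_nonneg _))).fderiv
  have hsum : ∑ i, inner ℝ x (b i) * inner ℝ (b i) x = ‖x‖ ^ 2 := by
    rw [b.sum_inner_mul_inner, real_inner_self_eq_norm_sq]
  have hderiv₂ (v : E) : fderiv ℝ (fderiv ℝ fun y : E ↦ F (‖y‖ ^ 2)) x v v =
      2 * F' (‖x‖ ^ 2) * ‖v‖ ^ 2 + 4 * F'' (‖x‖ ^ 2) * (inner ℝ x v * inner ℝ v x) := by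
    rw [hderiv, (((hasFDerivAt_comp_norm_sq (hF' (‖x‖ ^ 2) (sq_nonneg _))).const_mul 2).fun_smul
      (innerSL ℝ : E →L[ℝ] E →L[ℝ] ℝ).hasFDerivAt).fderiv]
    change 2 * F' (‖x‖ ^ 2) * inner ℝ v v +
      2 * (2 * F'' (‖x‖ ^ 2) * inner ℝ x v) * inner ℝ x v = _
    rw [real_inner_self_eq_norm_sq, real_inner_comm x v]
    ring
  simp only [laplacian_eq_sum_fderiv_fderiv b, hderiv₂, b.norm_eq_one, Finset.sum_add_distrib,
    ← Finset.mul_sum, ← hsum]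
  simp
  ring

lemma hasDerivAt_add_const_rpow {c : ℝ} (hc : 0 < c) (α : ℝ) {s : ℝ} (hs : 0 ≤ s) :
    HasDerivAt (fun s ↦ (s + c) ^ α) (α * (s + c) ^ (α - 1)) s := by
  simpa using ((hasDerivAt_id s).add_const c).rpow_const (p := α) (.inl (by positivity))

lemma laplacian_norm_sq_add_const_rpow {c : ℝ} (hc : 0 < c) (α : ℝ) :
    Δ (fun x : E ↦ (‖x‖ ^ 2 + c) ^ α) = fun x ↦
      2 * α * (finrank ℝ E + 2 * (α - 1)) * (‖x‖ ^ 2 + c) ^ (α - 1) -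
        4 * α * (α - 1) * c * (‖x‖ ^ 2 + c) ^ (α - 2) := by
  ext1 x
  rw [laplacian_comp_norm_sq (fun s hs ↦ hasDerivAt_add_const_rpow hc α hs)
    fun s hs ↦ (hasDerivAt_add_const_rpow hc (α - 1) hs).const_mul α]
  have hpow : (‖x‖ ^ 2 + c) ^ (α - 1) = (‖x‖ ^ 2 + c) ^ (α - 2) * (‖x‖ ^ 2 + c) := by
    rw [← Real.rpow_add_one (by positivity)]
    ring_nf
  rw [hpow, show α - 1 - 1 = α - 2 by ring]
  ring

variable [MeasurableSpace E] [BorelSpace E]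

lemma integral_mul_fderiv_eq_neg_fderiv_mul {f φ : E → ℝ} (hf : ContDiff ℝ 1 f)
    (hφ : ContDiff ℝ 1 φ) (hc : HasCompactSupport φ) (v : E) :
    ∫ x, f x * fderiv ℝ φ x v = -∫ x, fderiv ℝ f x v * φ x := by
  have hf' := (hf.continuous_fderiv one_ne_zero).clm_apply (continuous_const (y := v))
  have hφ' := (hφ.continuous_fderiv one_ne_zero).clm_apply (continuous_const (y := v))
  exact integral_mul_fderiv_eq_neg_fderiv_mul_of_integrable
    ((hf'.mul hφ.continuous).integrable_of_hasCompactSupport hc.mul_left)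
    ((hf.continuous.mul hφ').integrable_of_hasCompactSupport (hc.fderiv_apply ℝ v).mul_left)
    ((hf.continuous.mul hφ.continuous).integrable_of_hasCompactSupport hc.mul_left)
    (fun x _ ↦ hf.differentiable one_ne_zero x) fun x _ ↦ hφ.differentiable one_ne_zero x

lemma integral_mul_laplacian_eq_integral_laplacian_mul {f φ : E → ℝ} (hf : ContDiff ℝ 2 f)
    (hφ : ContDiff ℝ 2 φ) (hc : HasCompactSupport φ) :
    ∫ x, f x * Δ φ x = ∫ x, Δ f x * φ x := by
  set b := stdOrthonormalBasis ℝ E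
  have hf' (v : E) : ContDiff ℝ 1 fun x ↦ fderiv ℝ f x v := contDiff_fderiv_apply_const hf v
  have hφ' (v : E) : ContDiff ℝ 1 fun x ↦ fderiv ℝ φ x v := contDiff_fderiv_apply_const hφ v
  have hcont {g : E → ℝ} (hg : ContDiff ℝ 1 g) (v : E) : Continuous fun x ↦ fderiv ℝ g x v :=
    (hg.continuous_fderiv one_ne_zero).clm_apply continuous_const
  have hparts (v : E) : ∫ x, f x * fderiv ℝ (fun y ↦ fderiv ℝ φ y v) x v =
      ∫ x, fderiv ℝ (fun y ↦ fderiv ℝ f y v) x v * φ x := by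
    rw [integral_mul_fderiv_eq_neg_fderiv_mul (hf.of_le one_le_two) (hφ' v) (hc.fderiv_apply ℝ v),
      integral_mul_fderiv_eq_neg_fderiv_mul (hf' v) (hφ.of_le one_le_two) hc, neg_neg]
  simp only [laplacian_eq_sum_fderiv_fderiv_apply b hf, laplacian_eq_sum_fderiv_fderiv_apply b hφ,
    Finset.mul_sum, Finset.sum_mul]
  rw [integral_finsetSum, integral_finsetSum]
  · exact Finset.sum_congr rfl fun i _ ↦ hparts (b i)
  · exact fun i _ ↦ ((hcont (hf' (b i)) (b i)).mul
      hφ.continuous).integrable_of_hasCompactSupport hc.mul_left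
  · exact fun i _ ↦ (hf.continuous.mul (hcont (hφ' (b i)) (b i))).integrable_of_hasCompactSupport
      ((hc.fderiv_apply ℝ _).fderiv_apply ℝ _).mul_left

lemma integral_mul_laplacian_laplacian_eq {f φ : E → ℝ} (hf : ContDiff ℝ 4 f)
    (hφ : ContDiff ℝ 4 φ) (hc : HasCompactSupport φ) :
    ∫ x, f x * Δ (Δ φ) x = ∫ x, Δ (Δ f) x * φ x := by
  rw [integral_mul_laplacian_eq_integral_laplacian_mul (hf.of_le (by norm_num))
      (contDiff_two_laplacian hφ) (hasCompactSupport_laplacian hc),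
    integral_mul_laplacian_eq_integral_laplacian_mul (contDiff_two_laplacian hf)
      (hφ.of_le (by norm_num)) hc]

end Laplacian

section FundamentalSolution

lemma cos_arctan_pow_seven (r : ℝ) : cos (arctan r) ^ 7 = (r ^ 2 + 1) ^ (-7 / 2 : ℝ) := by
  rw [cos_arctan, one_div, sqrt_eq_rpow, ← Real.rpow_neg (by positivity), add_comm,
    ← Real.rpow_natCast, ← Real.rpow_mul (by positivity)]
  norm_num

lemma integral_Ioi_sq_mul_sq_add_one_rpow :
    ∫ r in Set.Ioi (0 : ℝ), r ^ 2 * (r ^ 2 + 1) ^ (-7 / 2 : ℝ) = 2 / 15 := by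
  -- With `r = tan θ` the integrand becomes `sin² θ cos³ θ dθ = (s² - s⁴) ds` for `s = sin θ`.
  have hderiv (r : ℝ) : HasDerivAt (fun r ↦ sin (arctan r) ^ 3 / 3 - sin (arctan r) ^ 5 / 5)
      (r ^ 2 * (r ^ 2 + 1) ^ (-7 / 2 : ℝ)) r := by
    have hsin := (hasDerivAt_sin (arctan r)).comp r (hasDerivAt_arctan r)
    refine (((hsin.pow 3).div_const 3).sub ((hsin.pow 5).div_const 5)).congr_deriv ?_
    have hr : sin (arctan r) = r * cos (arctan r) := by
      rw [← tan_mul_cos (cos_arctan_pos r).ne', tan_arctan]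
    rw [← cos_arctan_pow_seven, ← cos_sq_arctan]
    simp only [Function.comp_apply]
    linear_combination cos (arctan r) ^ 3 * (-sin (arctan r) ^ 2 * cos_sq' (arctan r) +
      cos (arctan r) ^ 2 * (sin (arctan r) + r * cos (arctan r)) * hr)
  have hlim : Tendsto (fun r ↦ sin (arctan r) ^ 3 / 3 - sin (arctan r) ^ 5 / 5) atTop
      (𝓝 (2 / 15)) := by
    have hsin := (continuous_sin.tendsto (π / 2)).comp
      (tendsto_arctan_atTop.mono_right nhdsWithin_le_nhds)
    convert! ((hsin.pow 3).div_const 3).sub ((hsin.pow 5).div_const 5) using 2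
    norm_num
  rw [integral_Ioi_of_hasDerivAt_of_nonneg (hderiv 0).continuousAt.continuousWithinAt
    (fun r _ ↦ hderiv r) (fun r _ ↦ by positivity) hlim]
  simp

variable {E : Type*} [NormedAddCommGroup E]

lemma tendsto_norm_pow_three_mul_norm_sq_add_one_rpow :
    Tendsto (fun x : E ↦ ‖x‖ ^ 3 * (‖x‖ ^ 2 + 1) ^ (-7 / 2 : ℝ)) (Bornology.cobounded E)
      (𝓝 0) := by
  have hreal : Tendsto (fun r : ℝ ↦ r ^ 3 * (r ^ 2 + 1) ^ (-7 / 2 : ℝ)) atTop (𝓝 0) := by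
    refine squeeze_zero' ?_ ?_ tendsto_inv_atTop_zero
    · filter_upwards [eventually_ge_atTop 0] with r hr using by positivity
    · filter_upwards [eventually_gt_atTop 0] with r hr
      calc r ^ 3 * (r ^ 2 + 1) ^ (-7 / 2 : ℝ) ≤ r ^ 3 * (r ^ 2 + 1) ^ (-2 : ℝ) := by
            gcongr <;> nlinarith
        _ = r ^ 3 / (r ^ 2 + 1) ^ 2 := by
            rw [Real.rpow_neg (by positivity), ← div_eq_mul_inv, Real.rpow_ofNat]
        _ ≤ r⁻¹ := by
            rw [div_le_iff₀ (by positivity), ← div_eq_inv_mul, le_div_iff₀ hr]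
            nlinarith
  exact hreal.comp tendsto_norm_cobounded_atTop

variable [InnerProductSpace ℝ E] [FiniteDimensional ℝ E]

lemma laplacian_laplacian_sqrt_norm_sq_add_const (hE : finrank ℝ E = 3) {c : ℝ} (hc : 0 < c) :
    Δ (Δ fun x : E ↦ (‖x‖ ^ 2 + c) ^ (1 / 2 : ℝ)) =
      fun x ↦ -15 * c ^ 2 * (‖x‖ ^ 2 + c) ^ (-7 / 2 : ℝ) := by
  have hΔ : (Δ fun x : E ↦ (‖x‖ ^ 2 + c) ^ (1 / 2 : ℝ)) = fun x ↦
      2 * (‖x‖ ^ 2 + c) ^ (-1 / 2 : ℝ) + c * (‖x‖ ^ 2 + c) ^ (-3 / 2 : ℝ) := by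
    ext x
    rw [laplacian_norm_sq_add_const_rpow hc, hE]
    norm_num
  rw [hΔ, laplacian_mul_add_mul (contDiff_norm_sq_add_const_rpow hc _)
    (contDiff_norm_sq_add_const_rpow hc _), laplacian_norm_sq_add_const_rpow hc,
    laplacian_norm_sq_add_const_rpow hc, hE]
  ext1 x
  norm_num
  ring

variable [MeasurableSpace E] [BorelSpace E]

lemma integral_norm_sq_add_one_rpow (hE : finrank ℝ E = 3) :
    ∫ x : E, (‖x‖ ^ 2 + 1) ^ (-7 / 2 : ℝ) = 8 * π / 15 := by
  have : Nontrivial E := nontrivial_of_finrank_pos (R := ℝ) (by lia)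
  have hball : volume.real (Metric.ball (0 : E) 1) = 4 / 3 * π := by
    rw [Measure.real, InnerProductSpace.volume_ball_of_dim_odd (k := 1) hE]
    norm_num [hE, Nat.doubleFactorial]
    rw [ENNReal.toReal_ofReal (by positivity)]
    ring
  rw [integral_fun_norm_addHaar volume fun r ↦ (r ^ 2 + 1) ^ (-7 / 2 : ℝ), hball, hE]
  simp only [smul_eq_mul, nsmul_eq_mul, Nat.add_one_sub_one, integral_Ioi_sq_mul_sq_add_one_rpow]
  norm_num
  ring

lemma integral_sqrt_norm_sub_sq_add_const_mul_laplacian_laplacian (hE : finrank ℝ E = 3)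
    {φ : E → ℝ} (hφ : ContDiff ℝ 4 φ) (hc : HasCompactSupport φ) (y : E) {ε : ℝ} (hε : 0 < ε) :
    ∫ x, (‖x - y‖ ^ 2 + ε) ^ (1 / 2 : ℝ) * Δ (Δ φ) x =
      ∫ x, -15 * ε ^ 2 * (‖x - y‖ ^ 2 + ε) ^ (-7 / 2 : ℝ) * φ x := by
  rw [integral_mul_laplacian_laplacian_eq (f := fun x ↦ (‖x - y‖ ^ 2 + ε) ^ (1 / 2 : ℝ))
      ((contDiff_norm_sq_add_const_rpow hε _).comp (contDiff_id.sub contDiff_const)) hφ hc,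
    laplacian_comp_sub (fun x ↦ (‖x‖ ^ 2 + ε) ^ (1 / 2 : ℝ)), laplacian_comp_sub,
    laplacian_laplacian_sqrt_norm_sq_add_const hE hε]

lemma tendsto_integral_sqrt_norm_sub_sq_add_inv_sq_mul {g : E → ℝ} (hg : Continuous g)
    (hc : HasCompactSupport g) (y : E) :
    Tendsto (fun c : ℝ ↦ ∫ x, (‖x - y‖ ^ 2 + (c ^ 2)⁻¹) ^ (1 / 2 : ℝ) * g x) atTop
      (𝓝 (∫ x, ‖x - y‖ * g x)) := by
  have hcont (ε : ℝ) : Continuous fun x ↦ (‖x - y‖ ^ 2 + ε) ^ (1 / 2 : ℝ) * g x :=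
    (Continuous.rpow_const (by fun_prop) fun _ ↦ .inr (by norm_num)).mul hg
  refine tendsto_integral_filter_of_dominated_convergence
    (fun x ↦ ‖(‖x - y‖ ^ 2 + 1) ^ (1 / 2 : ℝ) * g x‖)
    (.of_forall fun c ↦ (hcont _).aestronglyMeasurable) ?_
    ((hcont 1).integrable_of_hasCompactSupport hc.mul_left).norm (.of_forall fun x ↦ ?_)
  · filter_upwards [eventually_ge_atTop 1] with c hc₁
    refine .of_forall fun x ↦ ?_
    have hinv : (c ^ 2)⁻¹ ≤ 1 := inv_le_one_of_one_le₀ (one_le_pow₀ hc₁)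
    simp only [norm_mul]
    gcongr ?_ * _
    rw [Real.norm_of_nonneg (by positivity), Real.norm_of_nonneg (by positivity)]
    gcongr
  · have hinv : Tendsto (fun c : ℝ ↦ ‖x - y‖ ^ 2 + (c ^ 2)⁻¹) atTop (𝓝 (‖x - y‖ ^ 2)) := by
      simpa using (tendsto_pow_atTop two_ne_zero).inv_tendsto_atTop.const_add (‖x - y‖ ^ 2)
    have hpow := hinv.rpow_const (p := 1 / 2) (.inr (by norm_num))
    rw [← sqrt_eq_rpow, sqrt_sq (norm_nonneg _)] at hpow
    exact hpow.mul_const (g x)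

lemma integral_norm_sub_mul_laplacian_laplacian (hE : finrank ℝ E = 3) {φ : E → ℝ}
    (hφ : ContDiff ℝ 4 φ) (hc : HasCompactSupport φ) (y : E) :
    ∫ x, ‖x - y‖ * Δ (Δ φ) x = -(8 * π) * φ y := by
  -- `√(|x|² + c⁻²)` has bilaplacian `-8π c³ k(cx)`, an approximate identity as `c → ∞`.
  set k : E → ℝ := fun x ↦ 15 / (8 * π) * (‖x‖ ^ 2 + 1) ^ (-7 / 2 : ℝ)
  have hk : ∫ x, k x = 1 := by
    rw [integral_const_mul, integral_norm_sq_add_one_rpow hE]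
    field_simp
  have hdecay : Tendsto (fun x ↦ ‖x‖ ^ finrank ℝ E * k x) (Bornology.cobounded E) (𝓝 0) := by
    simpa [hE, k, mul_left_comm] using
      tendsto_norm_pow_three_mul_norm_sq_add_one_rpow.const_mul (15 / (8 * π))
  have hpeak := (tendsto_integral_comp_smul_smul_of_integrable' (fun x ↦ by positivity) hk hdecay
    (hφ.continuous.integrable_of_hasCompactSupport hc)
    (hφ.continuous.continuousAt (x := y))).const_mul (-(8 * π))
  refine tendsto_nhds_unique_of_eventuallyEq (tendsto_integral_sqrt_norm_sub_sq_add_inv_sq_mul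
    (continuous_laplacian_laplacian hφ)
    (hasCompactSupport_laplacian (hasCompactSupport_laplacian hc)) y) hpeak ?_
  filter_upwards [eventually_gt_atTop 0] with c hc₀
  rw [integral_sqrt_norm_sub_sq_add_const_mul_laplacian_laplacian hE hφ hc y (by positivity),
    ← integral_const_mul]
  refine integral_congr_ae (.of_forall fun x ↦ ?_)
  have hscale : ‖c • (y - x)‖ ^ 2 + 1 = c ^ 2 * (‖x - y‖ ^ 2 + (c ^ 2)⁻¹) := by
    rw [norm_smul, norm_sub_rev, Real.norm_of_nonneg hc₀.le]
    field_simp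
  have hpow : (c ^ 2) ^ (-7 / 2 : ℝ) = (c ^ 7)⁻¹ := by
    rw [← Real.rpow_natCast, ← Real.rpow_mul hc₀.le, ← Real.rpow_natCast, ← Real.rpow_neg hc₀.le]
    norm_num
  simp only [k, hE, smul_eq_mul, hscale,
    Real.mul_rpow (sq_nonneg c) (by positivity : 0 ≤ ‖x - y‖ ^ 2 + (c ^ 2)⁻¹), hpow]
  field_simp

end FundamentalSolution

section TruncatedPower

lemma hasDerivAt_max_zero_pow (n : ℕ) (s : ℝ) :
    HasDerivAt (fun s : ℝ ↦ max s 0 ^ (n + 2)) ((n + 2) * max s 0 ^ (n + 1)) s := by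
  have hpow : HasDerivAt (fun s : ℝ ↦ s ^ (n + 2)) ((n + 2) * s ^ (n + 1)) s := by
    simpa using hasDerivAt_pow (n + 2) s
  rcases lt_trichotomy s 0 with hs | rfl | hs
  · have hzero : (fun s : ℝ ↦ max s 0 ^ (n + 2)) =ᶠ[𝓝 s] fun _ ↦ 0 := by
      filter_upwards [Iio_mem_nhds hs] with t (ht : t < 0)
      simp [max_eq_right ht.le]
    simpa [max_eq_right hs.le] using (hasDerivAt_const s (0 : ℝ)).congr_of_eventuallyEq hzero
  · have hleft := ((hasDerivAt_const (0 : ℝ) (0 : ℝ)).hasDerivWithinAt (s := Set.Iic 0)).congr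
      (f₁ := fun s ↦ max s 0 ^ (n + 2)) (fun t (ht : t ≤ 0) ↦ by simp [max_eq_right ht]) (by simp)
    have hright := (hpow.hasDerivWithinAt (s := Set.Ici 0)).congr
      (f₁ := fun s ↦ max s 0 ^ (n + 2)) (fun t (ht : 0 ≤ t) ↦ by simp [max_eq_left ht]) (by simp)
    simp only [zero_pow n.succ_ne_zero, mul_zero, max_self] at hright ⊢
    simpa [Set.Iic_union_Ici, hasDerivWithinAt_univ] using hleft.union hright
  · have hpos : (fun s : ℝ ↦ max s 0 ^ (n + 2)) =ᶠ[𝓝 s] fun s ↦ s ^ (n + 2) := by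
      filter_upwards [Ioi_mem_nhds hs] with t (ht : 0 < t)
      rw [max_eq_left ht.le]
    rw [max_eq_left hs.le]
    exact hpow.congr_of_eventuallyEq hpos

lemma contDiff_max_zero_pow {k n : ℕ} (hkn : k < n) :
    ContDiff ℝ k fun s : ℝ ↦ max s 0 ^ n := by
  induction k generalizing n with
  | zero => exact contDiff_zero.2 (by fun_prop)
  | succ k ih =>
    obtain ⟨m, rfl⟩ : ∃ m, n = m + 2 := ⟨n - 2, by lia⟩
    rw [Nat.cast_succ, contDiff_succ_iff_deriv]
    refine ⟨fun s ↦ (hasDerivAt_max_zero_pow m s).differentiableAt, by simp, ?_⟩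
    rw [funext fun s ↦ (hasDerivAt_max_zero_pow m s).deriv]
    exact contDiff_const.mul (ih (by lia))

variable {E : Type*} [NormedAddCommGroup E]

/-- The truncated power `(1 - ‖y‖²)₊ ^ n`, a bump function of class `C^(n-1)` supported in the
unit ball. The Laplacian and the dilations act on these functions by two-term recurrences in `n`. -/
noncomputable def truncatedPower (n : ℕ) (y : E) : ℝ :=
  max (1 - ‖y‖ ^ 2) 0 ^ n

lemma truncatedPower_nonneg (n : ℕ) (y : E) : 0 ≤ truncatedPower n y :=
  pow_nonneg (le_max_right _ _) n

lemma truncatedPower_zero (n : ℕ) : truncatedPower n (0 : E) = 1 := by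
  simp [truncatedPower]

lemma continuous_truncatedPower (n : ℕ) : Continuous (truncatedPower n : E → ℝ) := by
  unfold truncatedPower
  fun_prop

lemma truncatedPower_of_one_le_norm {n : ℕ} (hn : n ≠ 0) {y : E} (hy : 1 ≤ ‖y‖) :
    truncatedPower n y = 0 := by
  rw [truncatedPower, max_eq_right (by nlinarith), zero_pow hn]

lemma norm_sq_mul_truncatedPower (n : ℕ) (y : E) :
    ‖y‖ ^ 2 * truncatedPower (n + 1) y = truncatedPower (n + 1) y - truncatedPower (n + 2) y := by
  unfold truncatedPower
  rcases le_total (1 - ‖y‖ ^ 2) 0 with hy | hy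
  · simp [max_eq_right hy]
  · rw [max_eq_left hy]
    ring

lemma hasDerivAt_max_one_sub_zero_pow (n : ℕ) (s : ℝ) :
    HasDerivAt (fun s : ℝ ↦ max (1 - s) 0 ^ (n + 2)) (-((n + 2) * max (1 - s) 0 ^ (n + 1))) s := by
  simpa [Function.comp_def] using
    (hasDerivAt_max_zero_pow n (1 - s)).comp s ((hasDerivAt_id s).const_sub 1)

variable [InnerProductSpace ℝ E]

lemma contDiff_truncatedPower {k n : ℕ} (hkn : k < n) :
    ContDiff ℝ k (truncatedPower n : E → ℝ) :=
  (contDiff_max_zero_pow hkn).comp (contDiff_const.sub (contDiff_norm_sq ℝ))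

lemma fderiv_truncatedPower_apply_self (n : ℕ) (y : E) :
    fderiv ℝ (truncatedPower (n + 2)) y y =
      -2 * (n + 2) * (truncatedPower (n + 1) y - truncatedPower (n + 2) y) := by
  have h := (hasFDerivAt_comp_norm_sq (hasDerivAt_max_one_sub_zero_pow n (‖y‖ ^ 2))).fderiv
  unfold truncatedPower at *
  rw [h, ← truncatedPower, ← truncatedPower, ← norm_sq_mul_truncatedPower, truncatedPower,
    smul_apply, innerSL_apply_apply, real_inner_self_eq_norm_sq, smul_eq_mul]
  ring

variable [FiniteDimensional ℝ E]

lemma hasCompactSupport_truncatedPower {n : ℕ} (hn : n ≠ 0) :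
    HasCompactSupport (truncatedPower n : E → ℝ) :=
  HasCompactSupport.intro (isCompact_closedBall 0 1) fun _ hy ↦
    truncatedPower_of_one_le_norm hn (not_le.1 (mem_closedBall_zero_iff.not.1 hy)).le

lemma laplacian_truncatedPower (n : ℕ) :
    Δ (truncatedPower (n + 3) : E → ℝ) = fun y ↦ 2 * (n + 3) *
      (2 * (n + 2) * truncatedPower (n + 1) y -
        (2 * (n + 2) + finrank ℝ E) * truncatedPower (n + 2) y) := by
  ext1 y
  have h := laplacian_comp_norm_sq (fun s _ ↦ hasDerivAt_max_one_sub_zero_pow (n + 1) s)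
    (fun s _ ↦ ((hasDerivAt_max_one_sub_zero_pow n s).const_mul ((n + 1 : ℕ) + 2 : ℝ)).neg) y
  have hrec := norm_sq_mul_truncatedPower n y
  unfold truncatedPower at *
  rw [h]
  push_cast
  linear_combination (4 * (n + 3) * (n + 2) : ℝ) * hrec

lemma laplacian_laplacian_truncatedPower (n : ℕ) :
    Δ (Δ (truncatedPower (n + 5) : E → ℝ)) = fun y ↦ 2 * (n + 5) *
      (2 * (n + 4) * Δ (truncatedPower (n + 3) : E → ℝ) y -
        (2 * (n + 4) + finrank ℝ E) * Δ (truncatedPower (n + 4) : E → ℝ) y) := by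
  have hΔ : Δ (truncatedPower (n + 5) : E → ℝ) = fun y ↦
      2 * (n + 5) * (2 * (n + 4)) * truncatedPower (n + 3) y +
        -(2 * (n + 5) * (2 * (n + 4) + finrank ℝ E)) * truncatedPower (n + 4) y := by
    ext1 y
    rw [laplacian_truncatedPower (n + 2)]
    push_cast
    ring
  rw [hΔ, laplacian_mul_add_mul (contDiff_truncatedPower (by lia))
    (contDiff_truncatedPower (by lia))]
  ext1 y
  ring

end TruncatedPower

section Pizzetti

lemma eq_of_hasDerivAt_zero_Ioi {f : ℝ → ℝ} {a : ℝ} (hf : ∀ t > a, HasDerivAt f 0 t) {s t : ℝ}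
    (hs : a < s) (ht : a < t) : f s = f t :=
  isOpen_Ioi.is_const_of_deriv_eq_zero isPreconnected_Ioi
    (fun t ht ↦ (hf t ht).differentiableAt.differentiableWithinAt) (fun t ht ↦ (hf t ht).deriv)
    hs ht

variable {E : Type*} [NormedAddCommGroup E] [InnerProductSpace ℝ E] [FiniteDimensional ℝ E]

lemma mul_laplacian_truncatedPower (c : ℝ) (n : ℕ) (y : E) :
    c * Δ (truncatedPower (n + 3) : E → ℝ) y =
      2 * (n + 3) * (2 * (n + 2)) * (c * truncatedPower (n + 1) y) -
        2 * (n + 3) * (2 * (n + 2) + finrank ℝ E) * (c * truncatedPower (n + 2) y) := by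
  rw [laplacian_truncatedPower]
  ring

variable [MeasurableSpace E] [BorelSpace E]

lemma hasDerivAt_integral_mul_comp_smul {w g : E → ℝ} (hw : Continuous w) (hg : ContDiff ℝ 1 g)
    (hc : HasCompactSupport g) {t : ℝ} (ht : 0 < t) :
    HasDerivAt (fun t ↦ ∫ z, w z * g (t • z)) (∫ z, w z * fderiv ℝ g (t • z) z) t := by
  have hg' := hg.continuous_fderiv one_ne_zero
  have hgc := hg.continuous
  obtain ⟨r, hr₀, hr⟩ := hc.isCompact.isBounded.exists_pos_norm_le
  obtain ⟨C, hC⟩ := (hc.fderiv ℝ).exists_bound_of_continuous hg'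
  set K := Metric.closedBall (0 : E) (2 * r / t)
  have hK {s : ℝ} (hs : t / 2 < s) {z : E} (hz : z ∉ K) : s • z ∉ tsupport g := fun hsz ↦ hz <| by
    have h := hr _ hsz
    rw [norm_smul, Real.norm_of_nonneg (by linarith)] at h
    rw [mem_closedBall_zero_iff, le_div_iff₀ ht]
    nlinarith [norm_nonneg z]
  have hbound : Integrable (K.indicator fun z ↦ ‖w z‖ * (C * ‖z‖)) :=
    (Continuous.continuousOn (by fun_prop)).integrableOn_compact
      (isCompact_closedBall _ _) |>.integrable_indicator measurableSet_closedBall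
  refine (hasDerivAt_integral_of_dominated_loc_of_deriv_le
    (F := fun t z ↦ w z * g (t • z)) (F' := fun t z ↦ w z * fderiv ℝ g (t • z) z)
    (Ioi_mem_nhds (half_lt_self ht)) (.of_forall fun s ↦ ?_) ?_ ?_
    (.of_forall fun z s (hs : t / 2 < s) ↦ ?_) hbound
    (.of_forall fun z s _ ↦ ?_)).2
  · exact (hw.mul (hgc.comp (continuous_const_smul s))).aestronglyMeasurable
  · exact (hw.mul (hgc.comp (continuous_const_smul t))).integrable_of_hasCompactSupport
      (hc.comp_smul ht.ne').mul_left
  · exact (hw.mul ((hg'.comp (continuous_const_smul t)).clm_apply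
      continuous_id)).aestronglyMeasurable
  · by_cases hz : z ∈ K
    · rw [Set.indicator_of_mem hz, norm_mul]
      gcongr
      exact (fderiv ℝ g (s • z)).le_of_opNorm_le (hC _) z
    · have hzero : fderiv ℝ g (s • z) = 0 :=
        image_eq_zero_of_notMem_tsupport fun h ↦ hK hs hz (tsupport_fderiv_subset ℝ h)
      simp [hzero, Set.indicator_of_notMem hz]
  · have hline : HasDerivAt (fun s : ℝ ↦ s • z) z s := by
      simpa using (hasDerivAt_id s).smul_const z
    exact (((hg.differentiable one_ne_zero _).hasFDerivAt.comp_hasDerivAt s hline)).const_mul (w z)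

/-- The integral of `h` against the truncated power of order `n` dilated to the ball of
radius `t⁻¹`. -/
noncomputable def dilatedMoment (h : E → ℝ) (n : ℕ) (t : ℝ) : ℝ :=
  ∫ z, h z * truncatedPower n (t • z)

lemma integrable_mul_truncatedPower_smul {h : E → ℝ} (hh : Continuous h) {n : ℕ} (hn : n ≠ 0)
    {t : ℝ} (ht : t ≠ 0) : Integrable fun z ↦ h z * truncatedPower n (t • z) :=
  (hh.mul ((continuous_truncatedPower n).comp (continuous_const_smul t)))
    |>.integrable_of_hasCompactSupport ((hasCompactSupport_truncatedPower hn).comp_smul ht).mul_left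

lemma integrable_mul_laplacian_truncatedPower_smul {h : E → ℝ} (hh : Continuous h) (n : ℕ)
    {t : ℝ} (ht : t ≠ 0) :
    Integrable fun z ↦ h z * Δ (truncatedPower (n + 3) : E → ℝ) (t • z) := by
  have hint (m : ℕ) := integrable_mul_truncatedPower_smul hh m.succ_ne_zero ht
  simp only [mul_laplacian_truncatedPower]
  exact ((hint n).const_mul _).sub ((hint (n + 1)).const_mul _)

lemma integral_mul_laplacian_truncatedPower_smul {h : E → ℝ} (hh : Continuous h) (n : ℕ)
    {t : ℝ} (ht : t ≠ 0) :
    ∫ z, h z * Δ (truncatedPower (n + 3) : E → ℝ) (t • z) = 2 * (n + 3) *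
      (2 * (n + 2) * dilatedMoment h (n + 1) t -
        (2 * (n + 2) + finrank ℝ E) * dilatedMoment h (n + 2) t) := by
  have hint (m : ℕ) := integrable_mul_truncatedPower_smul hh m.succ_ne_zero ht
  simp only [mul_laplacian_truncatedPower]
  rw [integral_sub ((hint n).const_mul _) ((hint (n + 1)).const_mul _), integral_const_mul,
    integral_const_mul, dilatedMoment, dilatedMoment]
  ring

lemma hasDerivAt_dilatedMoment {h : E → ℝ} (hh : Continuous h) (n : ℕ) {t : ℝ} (ht : 0 < t) :
    HasDerivAt (dilatedMoment h (n + 2))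
      (-2 * (n + 2) * (dilatedMoment h (n + 1) t - dilatedMoment h (n + 2) t) / t) t := by
  have hint (m : ℕ) := integrable_mul_truncatedPower_smul hh m.succ_ne_zero ht.ne'
  refine (hasDerivAt_integral_mul_comp_smul hh (contDiff_truncatedPower (by lia))
    (hasCompactSupport_truncatedPower (by lia)) ht).congr_deriv ?_
  simp only [dilatedMoment]
  rw [← integral_sub (hint n) (hint (n + 1)), mul_div_right_comm, ← integral_const_mul]
  refine integral_congr_ae (.of_forall fun z ↦ ?_)
  have hself := fderiv_truncatedPower_apply_self n (t • z)
  rw [map_smul, smul_eq_mul] at hself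
  simp only
  field_simp
  linear_combination h z * hself

lemma integral_comp_inv_smul_mul_truncatedPower (h : E → ℝ) (n : ℕ) {t : ℝ} (ht : 0 < t) :
    ∫ y, h (t⁻¹ • y) * truncatedPower n y = t ^ finrank ℝ E * dilatedMoment h n t := by
  have hcomp := Measure.integral_comp_inv_smul_of_nonneg volume
    (fun z ↦ h z * truncatedPower n (t • z)) ht.le
  rw [dilatedMoment, ← smul_eq_mul, ← hcomp]
  simp only [smul_inv_smul₀ ht.ne']

lemma continuous_integral_comp_smul_mul_truncatedPower {h : E → ℝ} (hh : Continuous h) {n : ℕ}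
    (hn : n ≠ 0) : Continuous fun R : ℝ ↦ ∫ y, h (R • y) * truncatedPower n y := by
  have hcont := continuous_truncatedPower (E := E) n
  refine continuousOn_univ.1 (continuousOn_integral_of_compact_support
    (isCompact_closedBall (0 : E) 1) (Continuous.continuousOn (by fun_prop)) fun R y _ hy ↦ ?_)
  rw [truncatedPower_of_one_le_norm hn (not_le.1 (mem_closedBall_zero_iff.not.1 hy)).le, mul_zero]

/-- A function `h` with `Δ²h = 0` in the sense of distributions, tested against compactly
supported functions of class `C⁴`. -/
def WeaklyBiharmonic (h : E → ℝ) : Prop :=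
  ∀ φ : E → ℝ, ContDiff ℝ 4 φ → HasCompactSupport φ → ∫ x, h x * Δ (Δ φ) x = 0

namespace WeaklyBiharmonic

variable {h : E → ℝ}

lemma integral_mul_laplacian_laplacian_comp_smul_sub (hh : WeaklyBiharmonic h) {φ : E → ℝ}
    (hφ : ContDiff ℝ 4 φ) (hs : HasCompactSupport φ) {c : ℝ} (hc : c ≠ 0) (a : E) :
    ∫ x, h x * Δ (Δ φ) (c • (x - a)) = 0 := by
  have hscale := hh (fun x ↦ φ (c • (x - a))) (hφ.comp (by fun_prop))
    ((hs.comp_smul hc).comp_homeomorph (Homeomorph.subRight a))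
  simp only [laplacian_laplacian_comp_smul_sub hφ, mul_left_comm (h _)] at hscale
  rw [integral_const_mul] at hscale
  exact (mul_eq_zero.1 hscale).resolve_left (pow_ne_zero 4 hc)

lemma comp_add_smul (hh : WeaklyBiharmonic h) (a : E) {c : ℝ} (hc : c ≠ 0) :
    WeaklyBiharmonic fun y ↦ h (a + c • y) := by
  intro φ hφ hs
  set F : E → ℝ := fun x ↦ h x * Δ (Δ φ) (c⁻¹ • (x - a))
  calc ∫ y, h (a + c • y) * Δ (Δ φ) y = ∫ y, F (a + c • y) := by
        simp only [F, add_sub_cancel_left, inv_smul_smul₀ hc]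
    _ = 0 := by
        rw [Measure.integral_comp_smul volume fun y ↦ F (a + y), integral_add_left_eq_self,
          hh.integral_mul_laplacian_laplacian_comp_smul_sub hφ hs (inv_ne_zero hc), smul_zero]

lemma dilatedMoment_recurrence (hh : WeaklyBiharmonic h) (hc : Continuous h) (n : ℕ) {t : ℝ}
    (ht : 0 < t) :
    2 * (n + 3) * (2 * (n + 2) * dilatedMoment h (n + 1) t -
        (2 * (n + 2) + finrank ℝ E) * dilatedMoment h (n + 2) t) =
      (2 * (n + 4) + finrank ℝ E) * (2 * (n + 3) * dilatedMoment h (n + 2) t -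
        (2 * (n + 3) + finrank ℝ E) * dilatedMoment h (n + 3) t) := by
  have hint (m : ℕ) := integrable_mul_laplacian_truncatedPower_smul hc m ht.ne'
  have hzero := hh.integral_mul_laplacian_laplacian_comp_smul_sub
    (contDiff_truncatedPower (n := n + 5) (by lia)) (hasCompactSupport_truncatedPower (by lia))
    ht.ne' 0
  have hexpand : (fun z ↦ h z * Δ (Δ (truncatedPower (n + 5) : E → ℝ)) (t • (z - 0))) = fun z ↦
      2 * (n + 5) * (2 * (n + 4) * (h z * Δ (truncatedPower (n + 3) : E → ℝ) (t • z)) -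
        (2 * (n + 4) + finrank ℝ E) *
          (h z * Δ (truncatedPower (n + 4) : E → ℝ) (t • z))) := by
    ext z
    rw [laplacian_laplacian_truncatedPower, sub_zero]
    ring
  rw [hexpand, integral_const_mul, integral_sub ((hint n).const_mul _)
    ((hint (n + 1)).const_mul _), integral_const_mul, integral_const_mul,
    integral_mul_laplacian_truncatedPower_smul hc n ht.ne',
    integral_mul_laplacian_truncatedPower_smul hc (n + 1) ht.ne',
    mul_eq_zero_iff_left (by positivity)] at hzero
  push_cast at hzero
  refine mul_left_cancel₀ (by positivity : (n + 4 : ℝ) ≠ 0) ?_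
  linear_combination hzero / 2

lemma exists_pow_mul_dilatedMoment_eq (hh : WeaklyBiharmonic h) (hc : Continuous h) (n : ℕ) :
    ∃ a b, ∀ t > 0, t ^ finrank ℝ E * dilatedMoment h (n + 3) t = a + b * t⁻¹ ^ 2 := by
  set d := finrank ℝ E
  -- `D t = -t * (d/dt) (t ^ d * M (n + 3) t)`, and the recurrence says that `D` is homogeneous of
  -- degree `-2`.
  set M := dilatedMoment h
  set D : ℝ → ℝ := fun t ↦ t ^ d * (2 * (n + 3) * M (n + 2) t - (2 * (n + 3) + d) * M (n + 3) t)
  have hpow (k : ℕ) {t : ℝ} (ht : 0 < t) : HasDerivAt (fun t ↦ t ^ k) (k * t ^ k / t) t := by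
    refine (hasDerivAt_pow k t).congr_deriv ?_
    rcases k with _ | k
    · simp
    · rw [pow_succ, Nat.add_sub_cancel]
      field_simp
  have hM (m : ℕ) {t : ℝ} (ht : 0 < t) : HasDerivAt (M (m + 2))
      (-2 * (m + 2) * (M (m + 1) t - M (m + 2) t) / t) t := hasDerivAt_dilatedMoment hc m ht
  have hD {t : ℝ} (ht : 0 < t) : t ^ 2 * D t = 1 ^ 2 * D 1 := by
    refine eq_of_hasDerivAt_zero_Ioi (f := fun t ↦ t ^ 2 * D t) (fun t ht ↦ ?_) ht one_pos
    refine ((hpow 2 ht).mul ((hpow d ht).mul (((hM n ht).const_mul (2 * (n + 3) : ℝ)).sub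
      ((hM (n + 1) ht).const_mul (2 * (n + 3) + d : ℝ))))).congr_deriv ?_
    have hrec := hh.dilatedMoment_recurrence hc n ht
    simp only [Pi.mul_apply, Pi.sub_apply]
    push_cast
    field_simp
    linear_combination (-t * t ^ d) * hrec
  refine ⟨M (n + 3) 1 - D 1 / 2, D 1 / 2, fun t ht ↦ ?_⟩
  have hmoment := eq_of_hasDerivAt_zero_Ioi
    (f := fun t ↦ t ^ d * M (n + 3) t - D 1 / 2 * t⁻¹ ^ 2) (fun t ht ↦ ?_) ht one_pos
  · simp only [one_pow, inv_one, one_mul, mul_one] at hmoment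
    linear_combination hmoment
  · refine (((hpow d ht).mul (hM (n + 1) ht)).sub
      (((hasDerivAt_inv ht.ne').pow 2).const_mul (D 1 / 2))).congr_deriv ?_
    have hDt := hD ht
    generalize D 1 = K at hDt ⊢
    push_cast
    field_simp
    linear_combination -hDt

lemma exists_pizzetti (hh : WeaklyBiharmonic h) (hc : Continuous h) (n : ℕ) :
    ∃ b, ∀ R > 0, ∫ y, h (R • y) * truncatedPower (n + 3) y =
      h 0 * (∫ y : E, truncatedPower (n + 3) y) + b * R ^ 2 := by
  obtain ⟨a, b, hab⟩ := hh.exists_pow_mul_dilatedMoment_eq hc n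
  have hmean {R : ℝ} (hR : 0 < R) :
      ∫ y, h (R • y) * truncatedPower (n + 3) y = a + b * R ^ 2 := by
    rw [← inv_inv R, integral_comp_inv_smul_mul_truncatedPower h _ (inv_pos.2 hR),
      hab _ (inv_pos.2 hR)]
  have ha : h 0 * ∫ y : E, truncatedPower (n + 3) y = a := by
    have hleft := (continuous_integral_comp_smul_mul_truncatedPower hc
      (n + 2).succ_ne_zero).continuousWithinAt (s := Set.Ioi 0) (x := 0)
    have hright : Tendsto (fun R : ℝ ↦ a + b * R ^ 2) (𝓝[>] 0) (𝓝 (a + b * 0 ^ 2)) :=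
      (Continuous.continuousWithinAt (by fun_prop))
    simpa [integral_const_mul] using tendsto_nhds_unique_of_eventuallyEq hleft hright
      (eventually_mem_nhdsWithin.mono fun R hR ↦ hmean hR)
  exact ⟨b, fun R hR ↦ by rw [hmean hR, ha]⟩

end WeaklyBiharmonic

end Pizzetti

section Liouville

lemma integral_truncatedPower_pos {E : Type*} [NormedAddCommGroup E] [InnerProductSpace ℝ E]
    [FiniteDimensional ℝ E] [MeasurableSpace E] [BorelSpace E] {n : ℕ} (hn : n ≠ 0) :
    0 < ∫ y : E, truncatedPower n y :=
  (continuous_truncatedPower n).integral_pos_of_hasCompactSupport_nonneg_nonzero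
    (hasCompactSupport_truncatedPower hn) (truncatedPower_nonneg n)
    (x := 0) (by simp [truncatedPower_zero])

section Convolution

variable {E F G : Type*} [NormedAddCommGroup E] [InnerProductSpace ℝ E] [FiniteDimensional ℝ E]
  [MeasurableSpace E] [BorelSpace E] [NormedAddCommGroup F] [NormedSpace ℝ F]
  [NormedAddCommGroup G] [NormedSpace ℝ G]

lemma fderiv_convolution_right {h : E → ℝ} (hh : Continuous h) {g : E → F} (hg : ContDiff ℝ 1 g)
    (hc : HasCompactSupport g) (L : ℝ →L[ℝ] F →L[ℝ] G) :
    fderiv ℝ (h ⋆[L, volume] g) = h ⋆[L.precompR E, volume] fderiv ℝ g :=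
  funext fun x ↦ (hc.hasFDerivAt_convolution_right L hh.locallyIntegrable hg x).fderiv

lemma exists_norm_convolution_zero_le {g : E → F} (hg : Continuous g)
    (hs : tsupport g ⊆ Metric.closedBall 0 2⁻¹) (L : ℝ →L[ℝ] F →L[ℝ] G) {n : ℕ} (hn : n ≠ 0) :
    ∃ C, ∀ h : E → ℝ, Continuous h →
      ‖(h ⋆[L, volume] g) 0‖ ≤ C * ∫ y, |h y| * truncatedPower n y := by
  obtain ⟨K, hK⟩ := (HasCompactSupport.of_support_subset_isCompact (isCompact_closedBall 0 _)
    ((subset_tsupport g).trans hs)).exists_bound_of_continuous hg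
  have hK₀ : 0 ≤ K := (norm_nonneg _).trans (hK 0)
  have hbound (y : E) : ‖g (0 - y)‖ ≤ K * (3 / 4)⁻¹ ^ n * truncatedPower n y := by
    by_cases hy : 0 - y ∈ tsupport g
    · have hnorm : ‖y‖ ≤ 2⁻¹ := by simpa using hs hy
      have hlow : (3 / 4 : ℝ) ^ n ≤ truncatedPower n y := by
        rw [truncatedPower]
        gcongr
        exact le_max_of_le_left (by nlinarith [norm_nonneg y])
      calc ‖g (0 - y)‖ ≤ K * (3 / 4)⁻¹ ^ n * (3 / 4) ^ n := by
            rw [mul_assoc, ← mul_pow, inv_mul_cancel₀ (by simp), one_pow, mul_one]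
            exact hK _
        _ ≤ _ := by gcongr
    · rw [image_eq_zero_of_notMem_tsupport hy, norm_zero]
      have := truncatedPower_nonneg n y
      positivity
  refine ⟨‖L‖ * (K * (3 / 4)⁻¹ ^ n), fun h hh ↦ ?_⟩
  rw [convolution_def, ← integral_const_mul]
  refine norm_integral_le_of_norm_le ?_ (.of_forall fun y ↦ ?_)
  · simpa using (integrable_mul_truncatedPower_smul hh.abs hn one_ne_zero).const_mul _
  · calc ‖L (h y) (g (0 - y))‖ ≤ ‖L‖ * |h y| * (K * (3 / 4)⁻¹ ^ n * truncatedPower n y) :=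
          (L.le_opNorm₂ _ _).trans (by gcongr; exacts [le_rfl, hbound y])
      _ = _ := by ring

end Convolution

section NormedSpace

variable {E : Type*} [NormedAddCommGroup E] [NormedSpace ℝ E]

lemma fderiv_comp_add_smul {F : Type*} [NormedAddCommGroup F] [NormedSpace ℝ F] (f : E → F) (a : E)
    (c : ℝ) : fderiv ℝ (fun y ↦ f (a + c • y)) = fun y ↦ c • fderiv ℝ f (a + c • y) := by
  ext1 y
  rw [fderiv_comp_smul (f := fun z ↦ f (a + z)), fderiv_comp_add_left]

set_option maxSynthPendingDepth 4 in
lemma fderiv_fderiv_fderiv_comp_add_smul (f : E → ℝ) (a : E) (c : ℝ) (y : E) :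
    fderiv ℝ (fderiv ℝ (fderiv ℝ fun y ↦ f (a + c • y))) y =
      c ^ 3 • fderiv ℝ (fderiv ℝ (fderiv ℝ f)) (a + c • y) := by
  rw [fderiv_comp_add_smul]
  change fderiv ℝ (fderiv ℝ (c • fun y ↦ fderiv ℝ f (a + c • y))) y = _
  rw [fderiv_const_smul_field, fderiv_comp_add_smul]
  change fderiv ℝ (c • c • fun y ↦ fderiv ℝ (fderiv ℝ f) (a + c • y)) y = _
  rw [fderiv_const_smul_field, fderiv_const_smul_field, fderiv_comp_add_smul]
  simp only [Pi.smul_apply, smul_smul, pow_three]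

lemma abs_mul_truncatedPower_le {n : ℕ} (hn : n ≠ 0) {h : E → ℝ} {C : ℝ}
    (hbound : ∀ x, -(C * (1 + ‖x‖)) ≤ h x) (x : E) {R : ℝ} (hR : 0 ≤ R) (y : E) :
    |h (x + R • y)| * truncatedPower n y ≤
      (h (x + R • y) + 2 * |C| * (1 + ‖x‖ + R)) * truncatedPower n y := by
  rcases le_total 1 ‖y‖ with hy | hy
  · simp [truncatedPower_of_one_le_norm hn hy]
  gcongr
  · exact truncatedPower_nonneg n y
  have hnorm : ‖x + R • y‖ ≤ ‖x‖ + R := by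
    refine (norm_add_le _ _).trans ?_
    rw [norm_smul, Real.norm_of_nonneg hR]
    nlinarith
  have hlow : C * (1 + ‖x + R • y‖) ≤ |C| * (1 + ‖x‖ + R) := by
    rw [add_assoc]
    gcongr
    exact le_abs_self C
  refine abs_le'.2 ⟨?_, ?_⟩
  · linarith [show 0 ≤ |C| * (1 + ‖x‖ + R) by positivity]
  · linarith [hbound (x + R • y)]

set_option maxSynthPendingDepth 4 in
lemma exists_eq_quadratic_of_fderiv_fderiv_fderiv_eq_zero {h : E → ℝ} (hh : ContDiff ℝ 3 h)
    (hzero : ∀ x, fderiv ℝ (fderiv ℝ (fderiv ℝ h)) x = 0) :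
    ∃ (A : E →L[ℝ] E →L[ℝ] ℝ) (L : E →L[ℝ] ℝ) (k : ℝ), (∀ x y, A x y = A y x) ∧
      ∀ x, h x = k + L x + 2⁻¹ * A x x := by
  have hd : ContDiff ℝ 2 (fderiv ℝ h) := hh.fderiv_right (by norm_num)
  have hdd : ContDiff ℝ 1 (fderiv ℝ (fderiv ℝ h)) := hd.fderiv_right (by norm_num)
  set A := fderiv ℝ (fderiv ℝ h) 0
  have hA (y : E) : HasFDerivAt (fderiv ℝ h) A y := by
    have hAy : A = fderiv ℝ (fderiv ℝ h) y :=
      is_const_of_fderiv_eq_zero (hdd.differentiable (by simp)) hzero 0 y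
    rw [hAy]
    exact (hd.differentiable (by simp) y).hasFDerivAt
  have hderiv (y : E) : fderiv ℝ h y = fderiv ℝ h 0 + A y := by
    have hdiff (y : E) := (hA y).fun_sub A.hasFDerivAt
    have hconst := is_const_of_fderiv_eq_zero (fun y ↦ (hdiff y).differentiableAt)
      (fun y ↦ (hdiff y).fderiv.trans (sub_self A)) y 0
    rw [map_zero, sub_zero] at hconst
    exact sub_eq_iff_eq_add.1 hconst
  have hsymm (y z : E) : A y z = A z y :=
    second_derivative_symmetric (fun y ↦ (hh.differentiable (by simp) y).hasFDerivAt) (hA 0) y z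
  have hremainder (y : E) :
      HasFDerivAt (fun y ↦ h y - fderiv ℝ h 0 y - 2⁻¹ * A y y) (0 : E →L[ℝ] ℝ) y := by
    refine (((hh.differentiable (by simp) y).hasFDerivAt.sub (fderiv ℝ h 0).hasFDerivAt).sub
      ((A.hasFDerivAt.clm_apply (hasFDerivAt_id y)).const_mul 2⁻¹)).congr_fderiv ?_
    ext z
    simp only [hderiv y, hsymm z y, add_sub_cancel_left, ContinuousLinearMap.comp_id, id_eq,
      sub_apply, add_apply, smul_apply, smul_eq_mul, ContinuousLinearMap.flip_apply, zero_apply]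
    ring
  refine ⟨A, fderiv ℝ h 0, h 0, hsymm, fun x ↦ ?_⟩
  have hconst := is_const_of_fderiv_eq_zero (fun y ↦ (hremainder y).differentiableAt)
    (fun y ↦ (hremainder y).fderiv) x 0
  simp only [map_zero, sub_zero, mul_zero] at hconst
  linear_combination hconst

end NormedSpace

variable {E : Type*} [NormedAddCommGroup E] [InnerProductSpace ℝ E] [FiniteDimensional ℝ E]
  [MeasurableSpace E] [BorelSpace E]

/-- A compactly supported `C³` kernel reproducing continuous weakly biharmonic functions: the
combination of the means at scales `4⁻¹` and `2⁻¹` that cancels the `R ^ 2` term of Pizzetti's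
formula. -/
noncomputable def pizzettiKernel (z : E) : ℝ :=
  (3 * ∫ y : E, truncatedPower 4 y)⁻¹ *
    (4 * 4 ^ finrank ℝ E * truncatedPower 4 ((4 : ℝ) • z) -
      2 ^ finrank ℝ E * truncatedPower 4 ((2 : ℝ) • z))

lemma contDiff_pizzettiKernel : ContDiff ℝ 3 (pizzettiKernel : E → ℝ) := by
  have hb : ContDiff ℝ 3 (truncatedPower 4 : E → ℝ) := contDiff_truncatedPower (by simp)
  unfold pizzettiKernel
  fun_prop

lemma tsupport_pizzettiKernel_subset :
    tsupport (pizzettiKernel : E → ℝ) ⊆ Metric.closedBall 0 2⁻¹ := by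
  refine closure_minimal (fun z hz ↦ ?_) Metric.isClosed_closedBall
  contrapose! hz
  rw [mem_closedBall_zero_iff, not_le] at hz
  have hzero {c : ℝ} (hc : 2 ≤ c) : truncatedPower 4 (c • z) = 0 := by
    refine truncatedPower_of_one_le_norm (by simp) ?_
    rw [norm_smul, Real.norm_of_nonneg (by linarith)]
    nlinarith
  simp [pizzettiKernel, hzero (le_refl 2), hzero (show (2 : ℝ) ≤ 4 by norm_num)]

lemma hasCompactSupport_pizzettiKernel : HasCompactSupport (pizzettiKernel : E → ℝ) :=
  (isCompact_closedBall 0 _).of_isClosed_subset (isClosed_tsupport _)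
    tsupport_pizzettiKernel_subset

namespace WeaklyBiharmonic

variable {h : E → ℝ}

lemma integral_mul_pizzettiKernel (hh : WeaklyBiharmonic h) (hc : Continuous h) :
    ∫ z, h z * pizzettiKernel z = h 0 := by
  have hint {c : ℝ} (hc₀ : c ≠ 0) := integrable_mul_truncatedPower_smul hc four_ne_zero hc₀
  have hJ : (∫ y : E, truncatedPower 4 y) ≠ 0 := (integral_truncatedPower_pos four_ne_zero).ne'
  obtain ⟨b, hb⟩ := hh.exists_pizzetti hc 1
  have hmean {c : ℝ} (hc₀ : 0 < c) : c ^ finrank ℝ E * ∫ z, h z * truncatedPower 4 (c • z) =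
      h 0 * (∫ y : E, truncatedPower 4 y) + b * c⁻¹ ^ 2 :=
    (integral_comp_inv_smul_mul_truncatedPower h 4 hc₀).symm.trans (hb _ (inv_pos.2 hc₀))
  have hexpand : (fun z ↦ h z * pizzettiKernel z) = fun z ↦ (3 * ∫ y : E, truncatedPower 4 y)⁻¹ *
      (4 * 4 ^ finrank ℝ E * (h z * truncatedPower 4 ((4 : ℝ) • z)) -
        2 ^ finrank ℝ E * (h z * truncatedPower 4 ((2 : ℝ) • z))) := by
    ext z
    rw [pizzettiKernel]
    ring
  rw [hexpand, integral_const_mul, integral_sub ((hint four_ne_zero).const_mul _)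
    ((hint two_ne_zero).const_mul _), integral_const_mul, integral_const_mul, mul_assoc,
    hmean four_pos, hmean two_pos]
  field_simp
  ring

lemma convolution_pizzettiKernel (hh : WeaklyBiharmonic h) (hc : Continuous h) :
    h ⋆[ContinuousLinearMap.lsmul ℝ ℝ, volume] pizzettiKernel = h := by
  ext x
  rw [convolution_lsmul_swap]
  simpa [sub_eq_add_neg] using (hh.comp_add_smul x (c := -1) (by simp)).integral_mul_pizzettiKernel
    (by fun_prop)

lemma contDiff_three (hh : WeaklyBiharmonic h) (hc : Continuous h) : ContDiff ℝ 3 h := by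
  rw [← hh.convolution_pizzettiKernel hc]
  exact hasCompactSupport_pizzettiKernel.contDiff_convolution_right _ hc.locallyIntegrable
    contDiff_pizzettiKernel

set_option maxSynthPendingDepth 4 in
variable (E) in
lemma exists_norm_fderiv_fderiv_fderiv_zero_le :
    ∃ C, ∀ h : E → ℝ, WeaklyBiharmonic h → Continuous h →
      ‖fderiv ℝ (fderiv ℝ (fderiv ℝ h)) 0‖ ≤ C * ∫ y, |h y| * truncatedPower 4 y := by
  have hk₀ : ContDiff ℝ 3 (pizzettiKernel : E → ℝ) := contDiff_pizzettiKernel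
  have hk₁ : ContDiff ℝ 2 (fderiv ℝ (pizzettiKernel : E → ℝ)) := hk₀.fderiv_right (by norm_num)
  have hk₂ : ContDiff ℝ 1 (fderiv ℝ (fderiv ℝ (pizzettiKernel : E → ℝ))) :=
    hk₁.fderiv_right (by norm_num)
  have hs : HasCompactSupport (pizzettiKernel : E → ℝ) := hasCompactSupport_pizzettiKernel
  obtain ⟨C, hC⟩ := exists_norm_convolution_zero_le
    (G := E →L[ℝ] E →L[ℝ] E →L[ℝ] ℝ) (hk₂.continuous_fderiv one_ne_zero)
    ((tsupport_fderiv_subset ℝ).trans <| (tsupport_fderiv_subset ℝ).trans <|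
      (tsupport_fderiv_subset ℝ).trans tsupport_pizzettiKernel_subset)
    ((((ContinuousLinearMap.lsmul ℝ ℝ).precompR E).precompR E).precompR E) four_ne_zero
  refine ⟨C, fun h hh hc ↦ ?_⟩
  specialize hC h hc
  rw [← fderiv_convolution_right hc hk₂ ((hs.fderiv ℝ).fderiv ℝ),
    ← fderiv_convolution_right hc (hk₁.of_le one_le_two) (hs.fderiv ℝ),
    ← fderiv_convolution_right hc (hk₀.of_le (by simp)) hs,
    hh.convolution_pizzettiKernel hc] at hC
  exact hC

lemma exists_integral_abs_comp_add_smul_le (hh : WeaklyBiharmonic h) (hc : Continuous h) {C : ℝ}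
    (hbound : ∀ x, -(C * (1 + ‖x‖)) ≤ h x) (x : E) :
    ∃ K, ∀ R ≥ 1, ∫ y, |h (x + R • y)| * truncatedPower 4 y ≤ K * R ^ 2 := by
  set J := ∫ y : E, truncatedPower 4 y
  have hJ : 0 < J := integral_truncatedPower_pos four_ne_zero
  have hshift : WeaklyBiharmonic fun y ↦ h (x + y) := by
    simpa only [one_smul] using hh.comp_add_smul x one_ne_zero
  obtain ⟨b, hb⟩ := hshift.exists_pizzetti (by fun_prop) 1
  rw [add_zero] at hb
  refine ⟨(|h x| + 2 * |C| * (2 + ‖x‖)) * J + |b|, fun R hR ↦ ?_⟩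
  have hint {g : E → ℝ} (hg : Continuous g) : Integrable fun y ↦ g y * truncatedPower 4 y := by
    simpa only [one_smul] using integrable_mul_truncatedPower_smul hg four_ne_zero one_ne_zero
  have hcR : Continuous fun y ↦ h (x + R • y) := by fun_prop
  calc ∫ y, |h (x + R • y)| * truncatedPower 4 y
      ≤ ∫ y, (h (x + R • y) + 2 * |C| * (1 + ‖x‖ + R)) * truncatedPower 4 y :=
        integral_mono (hint hcR.abs) (hint (hcR.add continuous_const))
          (abs_mul_truncatedPower_le four_ne_zero hbound x (zero_le_one.trans hR))
    _ = (h x + 2 * |C| * (1 + ‖x‖ + R)) * J + b * R ^ 2 := by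
        simp only [add_mul (h _)]
        rw [integral_add (hint hcR) (hint continuous_const), hb R (by linarith),
          integral_const_mul]
        ring
    _ ≤ (|h x| * R ^ 2 + 2 * |C| * ((2 + ‖x‖) * R ^ 2)) * J + |b| * R ^ 2 := by
        gcongr
        · exact (le_abs_self _).trans (le_mul_of_one_le_right (abs_nonneg _) (one_le_pow₀ hR))
        · nlinarith [norm_nonneg x, mul_nonneg (norm_nonneg x) (sub_nonneg.2 hR)]
        · exact le_abs_self b
    _ = _ := by ring

set_option maxSynthPendingDepth 4 in
lemma fderiv_fderiv_fderiv_eq_zero (hh : WeaklyBiharmonic h) (hc : Continuous h) {C : ℝ}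
    (hbound : ∀ x, -(C * (1 + ‖x‖)) ≤ h x) (x : E) :
    fderiv ℝ (fderiv ℝ (fderiv ℝ h)) x = 0 := by
  obtain ⟨M, hM⟩ := exists_norm_fderiv_fderiv_fderiv_zero_le E
  obtain ⟨K, hK⟩ := hh.exists_integral_abs_comp_add_smul_le hc hbound x
  set N := ‖fderiv ℝ (fderiv ℝ (fderiv ℝ h)) x‖
  have hdecay {R : ℝ} (hR : 1 ≤ R) : R * N ≤ |M| * K := by
    have hR₀ : 0 < R := by linarith
    have hscaled := hM _ (hh.comp_add_smul x hR₀.ne') (by fun_prop)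
    rw [fderiv_fderiv_fderiv_comp_add_smul, smul_zero, add_zero, norm_smul,
      Real.norm_of_nonneg (by positivity)] at hscaled
    have hpos : 0 ≤ ∫ y, |h (x + R • y)| * truncatedPower 4 y :=
      integral_nonneg fun y ↦ mul_nonneg (abs_nonneg _) (truncatedPower_nonneg 4 y)
    refine le_of_mul_le_mul_left (a := R ^ 2) ?_ (by positivity)
    calc R ^ 2 * (R * N) = R ^ 3 * N := by ring
      _ ≤ M * ∫ y, |h (x + R • y)| * truncatedPower 4 y := hscaled
      _ ≤ |M| * (K * R ^ 2) := mul_le_mul (le_abs_self M) (hK R hR) hpos (abs_nonneg M)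
      _ = R ^ 2 * (|M| * K) := by ring
  have hlim : Tendsto (fun R : ℝ ↦ |M| * K / R) atTop (𝓝 0) := tendsto_id.const_div_atTop _
  refine norm_le_zero_iff.1 (ge_of_tendsto hlim ?_)
  filter_upwards [eventually_ge_atTop 1] with R hR
  rw [le_div_iff₀' (by linarith)]
  exact hdecay hR

lemma exists_eq_quadratic (hh : WeaklyBiharmonic h) (hc : Continuous h) {C : ℝ}
    (hbound : ∀ x, -(C * (1 + ‖x‖)) ≤ h x) :
    ∃ (A : E →L[ℝ] E →L[ℝ] ℝ) (L : E →L[ℝ] ℝ) (k : ℝ), (∀ x y, A x y = A y x) ∧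
      ∀ x, h x = k + L x + 2⁻¹ * A x x :=
  exists_eq_quadratic_of_fderiv_fderiv_fderiv_eq_zero (hh.contDiff_three hc)
    (hh.fderiv_fderiv_fderiv_eq_zero hc hbound)

end WeaklyBiharmonic

end Liouville

section NormPotential

variable {E : Type*} [NormedAddCommGroup E]

lemma abs_norm_sub_sub_norm_le (x y : E) : |‖x - y‖ - ‖y‖| ≤ ‖x‖ := by
  simpa using abs_norm_sub_norm_le (x - y) (-y)

lemma tendsto_norm_sub_sub_norm_div_norm [NormedSpace ℝ E] [FiniteDimensional ℝ E] (y : E) :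
    Tendsto (fun x ↦ (‖x - y‖ - ‖y‖) / ‖x‖) (cocompact E) (𝓝 1) := by
  rw [← tendsto_sub_nhds_zero_iff]
  refine squeeze_zero_norm' ?_ ((tendsto_norm_cocompact_atTop (E := E)).const_div_atTop (2 * ‖y‖))
  filter_upwards [(tendsto_norm_cocompact_atTop (E := E)).eventually_gt_atTop 0] with x hx
  rw [div_sub_one hx.ne', norm_div, norm_norm, Real.norm_eq_abs]
  gcongr
  have hsub : |‖x - y‖ - ‖x‖| ≤ ‖y‖ := by simpa using abs_norm_sub_norm_le (x - y) x
  rw [abs_le] at hsub ⊢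
  constructor <;> linarith [norm_nonneg y]

variable [InnerProductSpace ℝ E] [FiniteDimensional ℝ E] [MeasurableSpace E] [BorelSpace E]

/-- The potential of the density `f` for the kernel `‖x - y‖`, which in dimension three is
`-8π` times the fundamental solution of `Δ²`. Subtracting `‖y‖` makes the integral converge for
every integrable `f`. -/
noncomputable def normPotential (f : E → ℝ) (x : E) : ℝ := ∫ y, (‖x - y‖ - ‖y‖) * f y

variable {f : E → ℝ}

lemma integrable_norm_sub_sub_norm_mul (hf : Integrable f) (x : E) :
    Integrable fun y ↦ (‖x - y‖ - ‖y‖) * f y :=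
  hf.bdd_mul (c := ‖x‖) (by fun_prop) (.of_forall fun y ↦ abs_norm_sub_sub_norm_le x y)

lemma normPotential_zero : normPotential f 0 = 0 := by simp [normPotential]

lemma abs_normPotential_sub_le (hf : Integrable f) (x x' : E) :
    |normPotential f x - normPotential f x'| ≤ (∫ y, ‖f y‖) * ‖x - x'‖ := by
  rw [normPotential, normPotential, ← integral_sub (integrable_norm_sub_sub_norm_mul hf x)
    (integrable_norm_sub_sub_norm_mul hf x'), ← integral_mul_const, ← Real.norm_eq_abs]
  refine norm_integral_le_of_norm_le (hf.norm.mul_const _) (.of_forall fun y ↦ ?_)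
  rw [← sub_mul, norm_mul, mul_comm]
  gcongr
  simpa using abs_norm_sub_norm_le (x - y) (x' - y)

lemma abs_normPotential_le (hf : Integrable f) (x : E) :
    |normPotential f x| ≤ (∫ y, ‖f y‖) * ‖x‖ := by
  simpa [normPotential_zero] using abs_normPotential_sub_le hf x 0

lemma continuous_normPotential (hf : Integrable f) : Continuous (normPotential f) :=
  (LipschitzWith.of_dist_le_mul (K := ⟨∫ y, ‖f y‖, integral_nonneg fun y ↦ norm_nonneg _⟩)
    fun x x' ↦ by
      rw [Real.dist_eq, dist_eq_norm]
      exact abs_normPotential_sub_le hf x x').continuous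

lemma tendsto_normPotential_div_norm (hf : Integrable f) :
    Tendsto (fun x ↦ normPotential f x / ‖x‖) (cocompact E) (𝓝 (∫ y, f y)) := by
  have hcg : (cocompact E).IsCountablyGenerated := by
    rw [← Metric.cobounded_eq_cocompact, ← comap_norm_atTop]
    infer_instance
  simp only [normPotential, ← integral_div, mul_div_right_comm]
  refine tendsto_integral_filter_of_dominated_convergence (fun y ↦ ‖f y‖) (.of_forall fun x ↦ ?_)
    (.of_forall fun x ↦ .of_forall fun y ↦ ?_) hf.norm (.of_forall fun y ↦ ?_)
  · exact (Continuous.aestronglyMeasurable (by fun_prop)).mul hf.aestronglyMeasurable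
  · rw [norm_mul, norm_div, norm_norm]
    exact mul_le_of_le_one_left (norm_nonneg _)
      (div_le_one_of_le₀ (abs_norm_sub_sub_norm_le x y) (norm_nonneg x))
  · simpa using (tendsto_norm_sub_sub_norm_div_norm y).mul_const (f y)

lemma tendsto_normPotential_isometry_add_div_norm (hf : Integrable f) (R : E ≃ₗᵢ[ℝ] E) (x₀ : E) :
    Tendsto (fun x ↦ normPotential f (R x + x₀) / ‖x‖) (cocompact E) (𝓝 (∫ y, f y)) := by
  have hrot : Tendsto (fun x ↦ normPotential f (R x) / ‖x‖) (cocompact E) (𝓝 (∫ y, f y)) := by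
    simpa [Function.comp_def] using (tendsto_normPotential_div_norm hf).comp
      R.toHomeomorph.isClosedEmbedding.tendsto_cocompact
  have hshift : Tendsto (fun x ↦ (normPotential f (R x + x₀) - normPotential f (R x)) / ‖x‖)
      (cocompact E) (𝓝 0) := by
    refine squeeze_zero_norm (fun x ↦ ?_)
      ((tendsto_norm_cocompact_atTop (E := E)).const_div_atTop ((∫ y, ‖f y‖) * ‖x₀‖))
    rw [norm_div, norm_norm]
    gcongr
    simpa using abs_normPotential_sub_le hf (R x + x₀) (R x)
  simpa [← add_div] using hrot.add hshift

section WeakEquation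

variable {φ : E → ℝ}

lemma integral_laplacian_laplacian_eq_zero (hφ : ContDiff ℝ 4 φ) (hs : HasCompactSupport φ) :
    ∫ x, Δ (Δ φ) x = 0 := by
  have hzero : Δ (0 : E → ℝ) = 0 := InnerProductSpace.laplacian_const
  simpa [hzero] using integral_mul_laplacian_laplacian_eq (contDiff_const (c := (1 : ℝ))) hφ hs

lemma integrable_norm_sub_sub_norm_mul_mul_prod {k : E → ℝ} (hf : Integrable f)
    (hk : Continuous k) (hs : HasCompactSupport k) :
    Integrable (Function.uncurry fun x y ↦ (‖x - y‖ - ‖y‖) * f y * k x)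
      (volume.prod volume) := by
  have hdom : Integrable fun x ↦ ‖x‖ * k x :=
    (continuous_norm.mul hk).integrable_of_hasCompactSupport hs.mul_left
  refine (hdom.mul_prod hf).mono ?_ (.of_forall fun p ↦ ?_)
  · exact ((Continuous.aestronglyMeasurable (by fun_prop)).mul
      hf.aestronglyMeasurable.comp_snd).mul hk.aestronglyMeasurable.comp_fst
  · simp only [Function.uncurry_def, norm_mul, norm_norm]
    rw [mul_right_comm]
    gcongr
    exact abs_norm_sub_sub_norm_le p.1 p.2

lemma integral_normPotential_mul_laplacian_laplacian (hE : finrank ℝ E = 3) (hf : Integrable f)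
    (hφ : ContDiff ℝ 4 φ) (hs : HasCompactSupport φ) :
    ∫ x, normPotential f x * Δ (Δ φ) x = -(8 * π) * ∫ y, f y * φ y := by
  have hk := continuous_laplacian_laplacian hφ
  have hks := hasCompactSupport_laplacian (hasCompactSupport_laplacian hs)
  have hkernel (y : E) : ∫ x, (‖x - y‖ - ‖y‖) * Δ (Δ φ) x = -(8 * π) * φ y := by
    have hint {c : E → ℝ} (hc : Continuous c) : Integrable fun x ↦ c x * Δ (Δ φ) x :=
      (hc.mul hk).integrable_of_hasCompactSupport hks.mul_left
    simp only [sub_mul]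
    rw [integral_sub (hint (by fun_prop)) (hint continuous_const), integral_const_mul,
      integral_laplacian_laplacian_eq_zero hφ hs, mul_zero, sub_zero,
      integral_norm_sub_mul_laplacian_laplacian hE hφ hs]
  calc ∫ x, normPotential f x * Δ (Δ φ) x
      = ∫ x, ∫ y, (‖x - y‖ - ‖y‖) * f y * Δ (Δ φ) x := by
        simp only [normPotential, integral_mul_const]
    _ = ∫ y, ∫ x, (‖x - y‖ - ‖y‖) * f y * Δ (Δ φ) x :=
        integral_integral_swap (integrable_norm_sub_sub_norm_mul_mul_prod hf hk hks)
    _ = ∫ y, -(8 * π) * (f y * φ y) := by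
        simp only [mul_right_comm _ (f _), integral_mul_const, hkernel]
        simp only [mul_assoc, mul_comm (f _)]
    _ = -(8 * π) * ∫ y, f y * φ y := integral_const_mul _ _

lemma weaklyBiharmonic_sub_normPotential (hE : finrank ℝ E = 3) {u : E → ℝ} (hu : ContDiff ℝ 4 u)
    (hf : Integrable f) (hsol : ∀ x, Δ (Δ u) x = -f x) :
    WeaklyBiharmonic fun x ↦ u x - (8 * π)⁻¹ * normPotential f x := by
  intro φ hφ hs
  have hk := continuous_laplacian_laplacian hφ
  have hks := hasCompactSupport_laplacian (hasCompactSupport_laplacian hs)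
  have hint {c : E → ℝ} (hc : Continuous c) : Integrable fun x ↦ c x * Δ (Δ φ) x :=
    (hc.mul hk).integrable_of_hasCompactSupport hks.mul_left
  simp only [sub_mul, mul_assoc (8 * π)⁻¹]
  rw [integral_sub (hint hu.continuous) ((hint (continuous_normPotential hf)).const_mul _),
    integral_const_mul, integral_normPotential_mul_laplacian_laplacian hE hf hφ hs,
    integral_mul_laplacian_laplacian_eq hu hφ hs]
  simp only [hsol, neg_mul, integral_neg]
  field_simp
  ring

end WeakEquation

end NormPotential

section QuadraticForm

variable {E : Type*} [NormedAddCommGroup E] [InnerProductSpace ℝ E] {n : ℕ}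

lemma exists_orthonormalBasis_diagonal [FiniteDimensional ℝ E] {A : E →L[ℝ] E →L[ℝ] ℝ}
    (hA : ∀ x y, A x y = A y x) (hn : finrank ℝ E = n) :
    ∃ (b : OrthonormalBasis (Fin n) ℝ E) (l : Fin n → ℝ),
      ∀ i y, A (b i) y = l i * inner ℝ (b i) y := by
  set T : E →ₗ[ℝ] E :=
    { toFun := fun x ↦ (InnerProductSpace.toDual ℝ E).symm (A x)
      map_add' := fun x y ↦ by simp only [map_add]
      map_smul' := fun r x ↦ by simp }
  have hinner (x y : E) : inner ℝ (T x) y = A x y := InnerProductSpace.toDual_symm_apply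
  have hT : T.IsSymmetric := fun x y ↦ by rw [hinner, real_inner_comm, hinner, hA]
  refine ⟨hT.eigenvectorBasis hn, hT.eigenvalues hn, fun i y ↦ ?_⟩
  rw [← hinner, hT.apply_eigenvectorBasis, inner_smul_left]
  simp

lemma linear_add_quadratic_repr_symm {A : E →L[ℝ] E →L[ℝ] ℝ} (L : E →L[ℝ] ℝ)
    {b : OrthonormalBasis (Fin n) ℝ E} {l : Fin n → ℝ}
    (hb : ∀ i y, A (b i) y = l i * inner ℝ (b i) y) (z : EuclideanSpace ℝ (Fin n)) :
    L (b.repr.symm z) + 2⁻¹ * A (b.repr.symm z) (b.repr.symm z) =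
      ∑ i, (L (b i) * z i + l i / 2 * z i ^ 2) := by
  have hx : b.repr.symm z = ∑ i, z i • b i := (b.sum_repr_symm z).symm
  have hA : A (b.repr.symm z) (b.repr.symm z) = ∑ i, z i * (l i * z i) := by
    have hAx : A (b.repr.symm z) = ∑ i, z i • A (b i) := by simp only [hx, map_sum, map_smul]
    rw [hAx, sum_apply]
    refine Finset.sum_congr rfl fun i _ ↦ ?_
    rw [smul_apply, hb, ← b.repr_apply_apply, LinearIsometryEquiv.apply_symm_apply, smul_eq_mul]
  have hL : L (b.repr.symm z) = ∑ i, z i * L (b i) := by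
    simp only [hx, map_sum, map_smul, smul_eq_mul]
  rw [hA, hL, Finset.mul_sum, ← Finset.sum_add_distrib]
  exact Finset.sum_congr rfl fun i _ ↦ by ring

lemma exists_completing_square {A : E →L[ℝ] E →L[ℝ] ℝ} (L : E →L[ℝ] ℝ)
    {b : OrthonormalBasis (Fin n) ℝ E} {l : Fin n → ℝ}
    (hb : ∀ i y, A (b i) y = l i * inner ℝ (b i) y) :
    ∃ (x₀ : E) (K : ℝ), ∀ z : EuclideanSpace ℝ (Fin n),
      L (b.repr.symm z + x₀) + 2⁻¹ * A (b.repr.symm z + x₀) (b.repr.symm z + x₀) =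
        ∑ i with l i ≠ 0, l i / 2 * z i ^ 2 + ∑ i with l i = 0, L (b i) * z i + K := by
  -- When `l i = 0` the junk value `-L (b i) / 0 = 0` is the right one.
  set y : EuclideanSpace ℝ (Fin n) := WithLp.toLp 2 fun i ↦ -L (b i) / l i
  refine ⟨b.repr.symm y, ∑ i, (L (b i) * y i + l i / 2 * y i ^ 2), fun z ↦ ?_⟩
  rw [← map_add, linear_add_quadratic_repr_symm L hb, Finset.sum_filter, Finset.sum_filter,
    ← Finset.sum_add_distrib, ← Finset.sum_add_distrib]
  refine Finset.sum_congr rfl fun i _ ↦ ?_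
  have hy : y i = -L (b i) / l i := rfl
  rw [PiLp.add_apply, hy]
  by_cases hl : l i = 0
  · simp [hl]
  · simp only [hl, if_false, ne_eq, not_false_eq_true, if_true]
    field_simp
    ring

end QuadraticForm

section QuadraticAsymptotics

lemma measure_eq_top_of_ball_smul_subset {E : Type*} [NormedAddCommGroup E] [NormedSpace ℝ E]
    [FiniteDimensional ℝ E] [MeasurableSpace E] [BorelSpace E] (μ : Measure E)
    [μ.IsAddHaarMeasure] {e : E} (he : ‖e‖ = 1) {s : Set E}
    (hs : ∀ t : ℝ, 0 ≤ t → Metric.ball (t • e) 1 ⊆ s) : μ s = ⊤ := by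
  have hdisj : Pairwise fun m n : ℕ ↦
      Disjoint (Metric.ball ((2 * m : ℝ) • e) 1) (Metric.ball ((2 * n : ℝ) • e) 1) := by
    intro m n hmn
    refine Metric.ball_disjoint_ball ?_
    have hdist : (1 : ℝ) ≤ |(m : ℝ) - n| := by
      exact_mod_cast Int.one_le_abs (sub_ne_zero.2 (Nat.cast_injective.ne hmn))
    rw [dist_eq_norm, ← sub_smul, norm_smul, he, ← mul_sub, norm_mul, Real.norm_two,
      Real.norm_eq_abs]
    linarith
  have hunion := measure_iUnion (μ := μ) hdisj fun _ ↦ measurableSet_ball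
  simp only [Measure.addHaar_ball_center] at hunion
  rw [ENNReal.tsum_const_eq_top_of_ne_zero (Metric.measure_ball_pos μ 0 one_pos).ne'] at hunion
  exact measure_mono_top (Set.iUnion_subset fun n : ℕ ↦ hs (2 * n) (by positivity)) hunion

variable {E : Type*} [NormedAddCommGroup E] [NormedSpace ℝ E] {u : E → ℝ}
  {A : E →L[ℝ] E →L[ℝ] ℝ} {L : E →L[ℝ] ℝ} {k β : ℝ}

lemma quadratic_nonneg_of_abs_sub_le (hpos : ∀ x, 0 ≤ u x)
    (hu : ∀ x, |u x - (k + L x + 2⁻¹ * A x x)| ≤ β * ‖x‖) (e : E) : 0 ≤ A e e := by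
  have hlim : Tendsto (fun t : ℝ ↦ k / t ^ 2 + (L e + β * ‖e‖) / t + 2⁻¹ * A e e) atTop
      (𝓝 (0 + 0 + 2⁻¹ * A e e)) :=
    (((tendsto_pow_atTop two_ne_zero).const_div_atTop k).add
      (tendsto_id.const_div_atTop _)).add tendsto_const_nhds
  have hnonneg : 0 ≤ 0 + 0 + 2⁻¹ * A e e := by
    refine ge_of_tendsto hlim ?_
    filter_upwards [eventually_gt_atTop 0] with t ht
    have hline := (abs_le.1 (hu (t • e))).2
    simp only [map_smul, smul_apply, smul_eq_mul, norm_smul, Real.norm_of_nonneg ht.le] at hline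
    have hmul : 0 ≤ (k / t ^ 2 + (L e + β * ‖e‖) / t + 2⁻¹ * A e e) * t ^ 2 := by
      field_simp
      linarith [hpos (t • e)]
    exact nonneg_of_mul_nonneg_left hmul (by positivity)
  linarith

variable [FiniteDimensional ℝ E]

lemma exists_forall_ball_smul_le (hA : ∀ x y, A x y = A y x)
    (hu : ∀ x, |u x - (k + L x + 2⁻¹ * A x x)| ≤ β * ‖x‖) {e : E} (he : ‖e‖ = 1)
    (hAe : ∀ y, A e y = 0) (hLe : L e ≤ -β) :
    ∃ M, ∀ t : ℝ, 0 ≤ t → ∀ x ∈ Metric.ball (t • e) 1, u x ≤ M := by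
  have hβ : 0 ≤ β := by simpa [he] using (abs_nonneg _).trans (hu e)
  obtain ⟨K, hK⟩ := (isCompact_closedBall (0 : E) 1).exists_bound_of_continuousOn
    (f := fun z ↦ k + L z + 2⁻¹ * A z z) (by fun_prop)
  refine ⟨β + K, fun t ht x hx ↦ ?_⟩
  obtain ⟨z, rfl⟩ : ∃ z, x = t • e + z := ⟨x - t • e, by abel⟩
  have hz : ‖z‖ ≤ 1 := by simpa [dist_eq_norm] using (Metric.mem_ball.1 hx).le
  have hnorm : ‖t • e + z‖ ≤ t + 1 := by
    refine (norm_add_le _ _).trans ?_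
    rw [norm_smul, he, Real.norm_of_nonneg ht]
    linarith
  have hquad : A (t • e + z) (t • e + z) = A z z := by
    simp [hAe, hA z e]
  have hux := (abs_le.1 (hu (t • e + z))).2
  rw [hquad, map_add, map_smul, smul_eq_mul] at hux
  have hKz := (le_abs_self _).trans (hK z (by simpa using hz))
  nlinarith [mul_le_mul_of_nonneg_left hnorm hβ, mul_le_mul_of_nonneg_left hLe ht]

variable [MeasurableSpace E] [BorelSpace E]

lemma neg_lt_apply_of_integrable (μ : Measure E) [μ.IsAddHaarMeasure] (hA : ∀ x y, A x y = A y x)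
    (hpos : ∀ x, 0 < u x) (hu : ∀ x, |u x - (k + L x + 2⁻¹ * A x x)| ≤ β * ‖x‖) {g : ℝ → ℝ}
    (hg : AntitoneOn g (Set.Ioi 0)) (hg_pos : ∀ t > 0, 0 < g t)
    (hint : Integrable (fun x ↦ g (u x)) μ) {e : E} (he : ‖e‖ = 1) (hAe : ∀ y, A e y = 0) :
    -β < L e := by
  by_contra! hLe
  obtain ⟨M, hM⟩ := exists_forall_ball_smul_le hA hu he hAe hLe
  have hM_pos : 0 < M := (hpos 0).trans_le (hM 0 le_rfl 0 (by simp))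
  refine (hint.measure_norm_ge_lt_top (hg_pos M hM_pos)).ne
    (measure_eq_top_of_ball_smul_subset μ he fun t ht x hx ↦ ?_)
  exact (hg (hpos x) hM_pos (hM t ht x hx)).trans (le_abs_self _)

lemma abs_apply_lt_of_integrable (μ : Measure E) [μ.IsAddHaarMeasure] (hA : ∀ x y, A x y = A y x)
    (hpos : ∀ x, 0 < u x) (hu : ∀ x, |u x - (k + L x + 2⁻¹ * A x x)| ≤ β * ‖x‖) {g : ℝ → ℝ}
    (hg : AntitoneOn g (Set.Ioi 0)) (hg_pos : ∀ t > 0, 0 < g t)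
    (hint : Integrable (fun x ↦ g (u x)) μ) {e : E} (he : ‖e‖ = 1) (hAe : ∀ y, A e y = 0) :
    |L e| < β := by
  refine abs_lt.2 ⟨neg_lt_apply_of_integrable μ hA hpos hu hg hg_pos hint he hAe, ?_⟩
  have hneg := neg_lt_apply_of_integrable μ hA hpos hu hg hg_pos hint (e := -e) (by simpa)
    (by simpa)
  rw [map_neg] at hneg
  linarith

end QuadraticAsymptotics

section Classification

lemma laplacian_eq (u : EuclideanSpace ℝ (Fin 3) → ℝ) : laplacian u = Δ u := by
  rw [InnerProductSpace.laplacian_eq_iteratedFDeriv_orthonormalBasis u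
    (EuclideanSpace.basisFun (Fin 3) ℝ)]
  simp [funext_iff, laplacian]

variable {E : Type*} [NormedAddCommGroup E] [InnerProductSpace ℝ E] [FiniteDimensional ℝ E]
  [MeasurableSpace E] [BorelSpace E] {u f : E → ℝ}

lemma exists_eq_normPotential_add_quadratic (hE : finrank ℝ E = 3) (hu : ContDiff ℝ 4 u)
    (hpos : ∀ x, 0 ≤ u x) (hf : Integrable f) (hsol : ∀ x, Δ (Δ u) x = -f x) :
    ∃ (A : E →L[ℝ] E →L[ℝ] ℝ) (L : E →L[ℝ] ℝ) (k : ℝ), (∀ x y, A x y = A y x) ∧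
      ∀ x, u x = (8 * π)⁻¹ * normPotential f x + (k + L x + 2⁻¹ * A x x) := by
  have hbound (x : E) : -((8 * π)⁻¹ * (∫ y, ‖f y‖) * (1 + ‖x‖)) ≤
      u x - (8 * π)⁻¹ * normPotential f x := by
    have hpot : (8 * π)⁻¹ * normPotential f x ≤ (8 * π)⁻¹ * ((∫ y, ‖f y‖) * ‖x‖) := by
      gcongr
      exact (le_abs_self _).trans (abs_normPotential_le hf x)
    have hmass : 0 ≤ (8 * π)⁻¹ * ∫ y, ‖f y‖ := by positivity
    linarith [hpos x]
  have hcont : Continuous fun x ↦ u x - (8 * π)⁻¹ * normPotential f x :=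
    hu.continuous.sub (continuous_const.mul (continuous_normPotential hf))
  obtain ⟨A, L, k, hA, hquad⟩ :=
    (weaklyBiharmonic_sub_normPotential hE hu hf hsol).exists_eq_quadratic hcont hbound
  exact ⟨A, L, k, hA, fun x ↦ by linarith [hquad x]⟩

lemma tendsto_sub_div_norm_of_eq_normPotential_add (hf : Integrable f) (R : E ≃ₗᵢ[ℝ] E) (x₀ : E)
    {Q : E → ℝ} {γ K : ℝ} (hu : ∀ x, u (R x + x₀) = γ * normPotential f (R x + x₀) + (Q x + K))
    (c : ℝ) :
    Tendsto (fun x ↦ (u (R x + x₀) - (Q x + c)) / ‖x‖) (cocompact E) (𝓝 (γ * ∫ y, f y)) := by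
  have hpot := (tendsto_normPotential_isometry_add_div_norm hf R x₀).const_mul γ
  have hconst := (tendsto_norm_cocompact_atTop (E := E)).const_div_atTop (K - c)
  rw [← add_zero (γ * _)]
  refine (hpot.add hconst).congr fun x ↦ ?_
  rw [hu]
  ring

theorem classification_of_finite_mass_solutions_general {g : ℝ → ℝ}
    (hg : AntitoneOn g (Set.Ioi 0)) (hg_pos : ∀ t > 0, 0 < g t)
    {u : EuclideanSpace ℝ (Fin 3) → ℝ} (hreg : ContDiff ℝ 4 u) (hpos : ∀ x, 0 < u x)
    (hsol : ∀ x, laplacian (laplacian u) x + g (u x) = 0)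
    (hint : Integrable (fun x ↦ g (u x))) :
    ∃ (R : EuclideanSpace ℝ (Fin 3) ≃ₗᵢ[ℝ] EuclideanSpace ℝ (Fin 3))
      (x₀ : EuclideanSpace ℝ (Fin 3)) (I₁ I₂ : Finset (Fin 3)) (a b : Fin 3 → ℝ) (c : ℝ),
      Disjoint I₁ I₂ ∧
      (∀ i ∈ I₁, 0 < a i) ∧
      (∀ i ∈ I₂, |b i| < (8 * π)⁻¹ * ∫ x, g (u x)) ∧
      0 < c ∧
      Tendsto
        (fun x : EuclideanSpace ℝ (Fin 3) ↦
          (u (R x + x₀) - (∑ i ∈ I₁, a i * (x i) ^ 2 + ∑ i ∈ I₂, b i * x i + c)) / ‖x‖)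
        (cocompact (EuclideanSpace ℝ (Fin 3)))
        (𝓝 ((8 * π)⁻¹ * ∫ x, g (u x))) := by
  obtain ⟨A, L, k, hA, hu⟩ := exists_eq_normPotential_add_quadratic (by simp) hreg
    (fun x ↦ (hpos x).le) hint (f := fun x ↦ g (u x)) fun x ↦ by
      rw [← laplacian_eq, ← laplacian_eq]; exact eq_neg_of_add_eq_zero_left (hsol x)
  have hclose (x) : |u x - (k + L x + 2⁻¹ * A x x)| ≤ ((8 * π)⁻¹ * ∫ x, g (u x)) * ‖x‖ := by
    have hnorm (x) : ‖g (u x)‖ = g (u x) := Real.norm_of_nonneg (hg_pos _ (hpos x)).le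
    have hpot := abs_normPotential_le hint x
    simp only [hnorm] at hpot
    rw [hu, add_sub_cancel_right, abs_mul, abs_of_pos (by positivity), mul_assoc]
    gcongr
  obtain ⟨b, l, hb⟩ := exists_orthonormalBasis_diagonal hA (n := 3) (by simp)
  obtain ⟨x₀, K, hK⟩ := exists_completing_square L hb
  have hl (i : Fin 3) : 0 ≤ l i := by
    simpa [hb] using quadratic_nonneg_of_abs_sub_le (fun x ↦ (hpos x).le) hclose (b i)
  refine ⟨b.repr.symm, x₀, Finset.univ.filter (l · ≠ 0), Finset.univ.filter (l · = 0),
    fun i ↦ l i / 2, fun i ↦ L (b i), 1, (Finset.disjoint_filter_filter_not _ _ _).symm, ?_, ?_,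
    one_pos, ?_⟩
  · simpa using fun i hi ↦ (hl i).lt_of_ne' hi
  · simp only [Finset.mem_filter_univ]
    exact fun i hi ↦ abs_apply_lt_of_integrable volume hA hpos hclose hg hg_pos hint
      (b.norm_eq_one i) fun y ↦ by rw [hb, hi, zero_mul]
  · refine tendsto_sub_div_norm_of_eq_normPotential_add hint b.repr.symm x₀ (K := k + K)
      (fun z ↦ ?_) 1
    rw [hu, add_assoc k, hK]
    ring

end Classification

/-- **Theorem (classification).** If `u` is a positive `C⁴` solution of `Δ²u + u^{-q} = 0` on ℝ³
with `q > 1` and `β = (8π)⁻¹ ∫ u^{-q} < ∞`, then, up to a rotation `R` and a translation `x₀`,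
`u(Rx + x₀) = (β + o(1))|x| + ∑_{i∈I₁} aᵢ xᵢ² + ∑_{i∈I₂} bᵢ xᵢ + c` with `I₁, I₂` disjoint,
`aᵢ > 0`, `|bᵢ| < β` and `c > 0`. -/
theorem classification_of_finite_mass_solutions
    (q : ℝ) (hq : 1 < q) (u : EuclideanSpace ℝ (Fin 3) → ℝ)
    (hreg : ContDiff ℝ 4 u) (hpos : ∀ x, 0 < u x)
    (hsol : ∀ x, laplacian (laplacian u) x + (u x) ^ (-q) = 0)
    (hint : Integrable (fun x => (u x) ^ (-q))) :
    ∃ (R : EuclideanSpace ℝ (Fin 3) ≃ₗᵢ[ℝ] EuclideanSpace ℝ (Fin 3))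
      (x₀ : EuclideanSpace ℝ (Fin 3)) (I₁ I₂ : Finset (Fin 3)) (a b : Fin 3 → ℝ) (c : ℝ),
      Disjoint I₁ I₂ ∧
      (∀ i ∈ I₁, 0 < a i) ∧
      (∀ i ∈ I₂, |b i| < (8 * π)⁻¹ * ∫ x, (u x) ^ (-q)) ∧
      0 < c ∧
      Tendsto
        (fun x : EuclideanSpace ℝ (Fin 3) =>
          (u (R x + x₀) - (∑ i ∈ I₁, a i * (x i) ^ 2 + ∑ i ∈ I₂, b i * x i + c)) / ‖x‖)
        (cocompact (EuclideanSpace ℝ (Fin 3)))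
        (𝓝 ((8 * π)⁻¹ * ∫ x, (u x) ^ (-q))) :=
  classification_of_finite_mass_solutions_general
    (Real.antitoneOn_rpow_Ioi_of_exponent_nonpos (by linarith)) (fun _ ht ↦ rpow_pos_of_pos ht _)
    hreg hpos hsol hint
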